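/- In the DaC model on the triangular lattice with colouring density r = 1/2, for every p ∈ [0,1] and every n ∈ ℕ, the probability of a black vertical crossing of the rhombus S_{n,n} equals exactly 1/2: ℙ_{p,1/2}(V^b_{n,n}) = 1/2. -/

import Mathlib

/-!
Common definitions for the Divide-and-Colour (DaC) model of
Bálint, Camia and Meester, "Sharp phase transition and critical
behaviour in 2D divide and colour models".

The model is built concretely: a single uniform random variable on `(0,1]`
is decomposed into countably many i.i.d. uniform random variables (via its
binary digits); one family of uniforms drives the Bernoulli(p) bond
percolation (the edge configuration), and an independent family of uniforms
attaches an independent Bernoulli(r) colour to each bond cluster (the colour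
of a cluster is determined by the uniform label of its canonical
representative, the vertex of minimal encoding).  The DaC measure
`ℙ_{p,r}` is the pushforward of Lebesgue measure on `(0,1]` under the map
producing the pair (edge configuration, colour configuration).
-/

open MeasureTheory ENNReal

namespace DaC

/-- Vertices of the lattice. -/
abbrev V : Type := ℤ × ℤ

/-- Square lattice adjacency: Euclidean distance `1`. -/
def SqAdj (u v : V) : Prop := (u.1 - v.1) ^ 2 + (u.2 - v.2) ^ 2 = 1

/-- `*`-adjacency (matching graph of the square lattice):
Euclidean distance `1` or `√2`. -/
def StarAdj (u v : V) : Prop :=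
  (u.1 - v.1) ^ 2 + (u.2 - v.2) ^ 2 = 1 ∨ (u.1 - v.1) ^ 2 + (u.2 - v.2) ^ 2 = 2

/-- Triangular lattice adjacency. -/
def TriAdj (u v : V) : Prop :=
  (u.1 - v.1, u.2 - v.2) ∈
    ({(1, 0), (-1, 0), (0, 1), (0, -1), (1, 1), (-1, -1)} : Set (ℤ × ℤ))

/-- Classical indicator of a proposition, as a boolean. -/
noncomputable def boolOf (P : Prop) : Bool := @decide P (Classical.propDecidable P)

/-- The `n`-th binary digit of a real number `x ∈ (0,1]`. -/
noncomputable def bit (n : ℕ) (x : ℝ) : Bool := boolOf (⌊x * 2 ^ (n + 1)⌋ % 2 = 1)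

/-- A countable family of i.i.d. uniform random variables on `[0,1]`, extracted
from a single uniform sample `x` by splitting its binary digits. -/
noncomputable def unif (i : ℕ) (x : ℝ) : ℝ :=
  ∑' k : ℕ, if bit (Nat.pair i k) x then ((2 : ℝ)⁻¹) ^ (k + 1) else 0

/-- A symmetric encoding of (unordered) pairs of vertices. -/
noncomputable def eIdx (u v : V) : ℕ :=
  min (Encodable.encode (u, v)) (Encodable.encode (v, u))

/-- The uniform label attached to the edge `{u,v}`. -/
noncomputable def edgeU (u v : V) (x : ℝ) : ℝ := unif (2 * eIdx u v) x

/-- The uniform label attached to the vertex `v` (independent of the edge labels). -/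
noncomputable def vtxU (v : V) (x : ℝ) : ℝ := unif (2 * Encodable.encode v + 1) x

/-- Edge configurations: a boolean (open/closed) for each (ordered) pair of
vertices; configurations arising from the model are symmetric and are
supported on pairs of adjacent vertices. -/
abbrev EdgeCfg : Type := V → V → Bool

/-- Colour configurations: a colour (black = `true`, white = `false`) for each vertex. -/
abbrev ColourCfg : Type := V → Bool

/-- Full configurations of the DaC model: an edge configuration together with
a colour configuration. -/
abbrev Config : Type := EdgeCfg × ColourCfg

/-- The Bernoulli(p) edge configuration determined by the uniform sample `x`,
on the lattice with adjacency `adj`: an edge `{u,v}` of the lattice is open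
iff its uniform label is `< p`. -/
noncomputable def edgeCfg (adj : V → V → Prop) (p : ℝ) (x : ℝ) : EdgeCfg :=
  fun u v => boolOf (adj u v) && boolOf (edgeU u v x < p)

/-- Connectivity through open edges of the edge configuration `η`. -/
def Conn (η : EdgeCfg) (u v : V) : Prop :=
  Relation.ReflTransGen (fun a b => η a b = true) u v

/-- The `p`-cluster of the vertex `v`: its connected component in the graph
retaining only open edges. -/
def pCluster (η : EdgeCfg) (v : V) : Set V := {w | Conn η v w}

/-- Canonical representative of the `p`-cluster of `v`: the vertex of the
cluster with minimal encoding. -/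
noncomputable def clusterRep (η : EdgeCfg) (v : V) : V :=
  (Encodable.decode (α := V) (sInf (Encodable.encode '' pCluster η v))).getD v

/-- The colour configuration with parameters `p, r` determined by the uniform
sample `x`: every `p`-cluster is coloured black (with probability `r`)
or white, independently of all other `p`-clusters, according to the uniform
label of its canonical representative. -/
noncomputable def colourCfg (adj : V → V → Prop) (p r : ℝ) (x : ℝ) : ColourCfg :=
  fun v => boolOf (vtxU (clusterRep (edgeCfg adj p x) v) x < r)

/-- The uniform sample: Lebesgue measure on `(0,1]`. -/
noncomputable def base : Measure ℝ := volume.restrict (Set.Ioc 0 1)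

/-- `ν_p`: the product Bernoulli(p) measure on edge configurations of the
lattice with adjacency `adj`. -/
noncomputable def edgeMeasure (adj : V → V → Prop) (p : ℝ) : Measure EdgeCfg :=
  base.map (edgeCfg adj p)

/-- `ℙ_{p,r}`: the DaC measure on pairs (edge configuration, colour
configuration) for the lattice with adjacency `adj`. -/
noncomputable def DaCMeasure (adj : V → V → Prop) (p r : ℝ) : Measure Config :=
  base.map (fun x => (edgeCfg adj p x, colourCfg adj p r x))

/-- Monochromatic connectivity: `u` and `v` are joined by a path (for the
adjacency `adj`) all of whose vertices have colour `c`. -/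
def MonoConn (adj : V → V → Prop) (ξ : ColourCfg) (c : Bool) (u v : V) : Prop :=
  Relation.ReflTransGen (fun a b => adj a b ∧ ξ a = c ∧ ξ b = c) u v

/-- The colour-`c` cluster of `v` (for the adjacency `adj`): empty if `v` does
not have colour `c`, and otherwise the maximal `adj`-connected set of
`c`-coloured vertices containing `v`. -/
def monoCluster (adj : V → V → Prop) (ξ : ColourCfg) (c : Bool) (v : V) : Set V :=
  {w | ξ v = c ∧ MonoConn adj ξ c v w}

/-- The origin. -/
def origin : V := (0, 0)

/-- The size (cardinality) of a set of vertices, with values in `ℝ≥0∞`. -/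
noncomputable def sizeE (S : Set V) : ℝ≥0∞ := S.encard

/-- The probability, under the DaC measure with edge adjacency `eadj` and
parameters `p, r`, that the origin lies in an infinite colour-`c` cluster for
the adjacency `cadj`. -/
noncomputable def percProb (eadj cadj : V → V → Prop) (c : Bool) (p r : ℝ) : ℝ≥0∞ :=
  DaCMeasure eadj p r {ω | (monoCluster cadj ω.2 c origin).Infinite}

/-- `Θ(p,r)` for the square lattice: probability that the origin lies in an
infinite black `r`-cluster. -/
noncomputable def thetaSq (p r : ℝ) : ℝ≥0∞ := percProb SqAdj SqAdj true p r

/-- `Θ*(p,s)` for the square lattice: the `ℙ_{p,1-s}`-probability that the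
origin lies in an infinite white `*`-cluster. -/
noncomputable def thetaStarSq (p s : ℝ) : ℝ≥0∞ := percProb SqAdj StarAdj false p (1 - s)

/-- `Θ(p,r)` for the triangular lattice. -/
noncomputable def thetaTri (p r : ℝ) : ℝ≥0∞ := percProb TriAdj TriAdj true p r

/-- The critical colouring density `r_c(p)` of the square lattice DaC model. -/
noncomputable def rcSq (p : ℝ) : ℝ :=
  sSup {r : ℝ | r ∈ Set.Icc (0 : ℝ) 1 ∧ thetaSq p r = 0}

/-- The critical colouring density `r_c*(p)` for white `*`-percolation. -/
noncomputable def rcStarSq (p : ℝ) : ℝ :=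
  sSup {s : ℝ | s ∈ Set.Icc (0 : ℝ) 1 ∧ thetaStarSq p s = 0}

/-- The critical colouring density `r_c(p)` of the triangular lattice DaC model. -/
noncomputable def rcTri (p : ℝ) : ℝ :=
  sSup {r : ℝ | r ∈ Set.Icc (0 : ℝ) 1 ∧ thetaTri p r = 0}

/-! ### Rectangles and crossings -/

/-- The rectangle `S_{n,m} = ([0,n] × [0,m]) ∩ ℤ²`. -/
def Rect (n m : ℕ) : Set V :=
  {v | 0 ≤ v.1 ∧ v.1 ≤ (n : ℤ) ∧ 0 ≤ v.2 ∧ v.2 ≤ (m : ℤ)}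

/-- The top side of `S_{n,m}`. -/
def TopSide (n m : ℕ) : Set V := {v | v ∈ Rect n m ∧ v.2 = (m : ℤ)}

/-- The bottom side of `S_{n,m}`. -/
def BotSide (n m : ℕ) : Set V := {v | v ∈ Rect n m ∧ v.2 = 0}

/-- The left side of `S_{n,m}`. -/
def LeftSide (n m : ℕ) : Set V := {v | v ∈ Rect n m ∧ v.1 = 0}

/-- The right side of `S_{n,m}`. -/
def RightSide (n m : ℕ) : Set V := {v | v ∈ Rect n m ∧ v.1 = (n : ℤ)}

/-- There is a path (for the adjacency `adj`), all of whose vertices lie in the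
region `R` and satisfy the predicate `good`, from the set `A` to the set `B`. -/
def HasCrossing (adj : V → V → Prop) (good : V → Prop) (R A B : Set V) : Prop :=
  ∃ (k : ℕ) (f : Fin (k + 1) → V),
    (∀ i, f i ∈ R ∧ good (f i)) ∧
    (∀ i : Fin k, adj (f i.castSucc) (f i.succ)) ∧
    f 0 ∈ A ∧ f (Fin.last k) ∈ B

/-- `V^b_{n,m}` as a set of colour configurations: there is a black vertical
crossing of `S_{n,m}` (for the adjacency `adj`). -/
def VertBC (adj : V → V → Prop) (n m : ℕ) : Set ColourCfg :=
  {ξ | HasCrossing adj (fun v => ξ v = true) (Rect n m) (TopSide n m) (BotSide n m)}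

/-- `V^{w*}_{n,m}` as a set of colour configurations: there is a white vertical
`*`-crossing of `S_{n,m}`. -/
def VertWStarC (n m : ℕ) : Set ColourCfg :=
  {ξ | HasCrossing StarAdj (fun v => ξ v = false) (Rect n m) (TopSide n m) (BotSide n m)}

/-- `H^{w*}_{n,m}` as a set of colour configurations: there is a white
horizontal `*`-crossing of `S_{n,m}`. -/
def HorizWStarC (n m : ℕ) : Set ColourCfg :=
  {ξ | HasCrossing StarAdj (fun v => ξ v = false) (Rect n m) (LeftSide n m) (RightSide n m)}

/-- The event (set of full configurations) determined by a set of colour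
configurations. -/
def colourEvent (C : Set ColourCfg) : Set Config := {ω | ω.2 ∈ C}

/-! ### Events depending on colours, increasing events, pivotal clusters -/

/-- The event `A` is defined in terms of the colours of the vertices in `W`. -/
def DependsOnColoursIn (A : Set Config) (W : Set V) : Prop :=
  ∀ ω ω' : Config, (∀ v ∈ W, ω.2 v = ω'.2 v) → (ω ∈ A ↔ ω' ∈ A)

/-- The event `A` is increasing (for the partial order comparing colour
configurations pointwise, black = `true` above white = `false`). -/
def IncreasingColourEvent (A : Set Config) : Prop :=
  ∀ ω ω' : Config, (∀ v : V, ω.2 v = true → ω'.2 v = true) → ω ∈ A → ω' ∈ A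

/-- Flip the colours of the vertices of `C`. -/
noncomputable def flipOn (C : Set V) (ξ : ColourCfg) : ColourCfg :=
  fun v => @ite _ (v ∈ C) (Classical.propDecidable _) (!ξ v) (ξ v)

/-- The set `C` is a pivotal `p`-cluster for the event `A` in the
configuration `ω`: `C` is a `p`-cluster of the edge configuration of `ω`, and
flipping the colour of (all the vertices of) `C` changes whether the
configuration belongs to `A`. -/
def IsPivotal (A : Set Config) (ω : Config) (C : Set V) : Prop :=
  (∃ v : V, C = pCluster ω.1 v) ∧ ¬ (ω ∈ A ↔ (ω.1, flipOn C ω.2) ∈ A)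

/-- `n(A)`: the number of pivotal `p`-clusters for the event `A`, with values
in `ℝ≥0∞`. -/
noncomputable def numPivotal (A : Set Config) (ω : Config) : ℝ≥0∞ :=
  {C : Set V | IsPivotal A ω C}.encard

/-! ### Barriers -/

/-- Connectivity in the square lattice avoiding the edges of `E`. -/
def AvoidConn (E : Set (V × V)) (u v : V) : Prop :=
  Relation.ReflTransGen (fun a b => SqAdj a b ∧ (a, b) ∉ E ∧ (b, a) ∉ E) u v

/-- `E` is a barrier: a set of edges of the square lattice whose removal
(keeping the end-vertices) separates `ℤ²` into two or more connected
components, exactly one of which is infinite. -/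
def IsBarrier (E : Set (V × V)) : Prop :=
  (∀ e ∈ E, SqAdj e.1 e.2) ∧
  (∃ v, {w | AvoidConn E v w}.Infinite) ∧
  (∀ v w, {x | AvoidConn E v x}.Infinite → {x | AvoidConn E w x}.Infinite → AvoidConn E v w) ∧
  (∃ v, {w | AvoidConn E v w}.Finite)

/-- The exterior of a barrier: its unique infinite complementary component. -/
def barrierExt (E : Set (V × V)) : Set V := {v | {w | AvoidConn E v w}.Infinite}

/-- The interior of a barrier: the union of the finite complementary components. -/
def barrierInt (E : Set (V × V)) : Set V := {v | {w | AvoidConn E v w}.Finite}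

/-- The event `A ⊆ EdgeCfg` is increasing (opening edges preserves it). -/
def IncreasingEdgeEvent (A : Set EdgeCfg) : Prop :=
  ∀ η η' : EdgeCfg, (∀ a b : V, η a b = true → η' a b = true) → η ∈ A → η' ∈ A

/-- The event `A ⊆ EdgeCfg` depends only on the states of the edges both of
whose endpoints lie in `W`. -/
def DependsOnEdgesIn (A : Set EdgeCfg) (W : Set V) : Prop :=
  ∀ η η' : EdgeCfg, (∀ a b : V, a ∈ W → b ∈ W → η a b = η' a b) → (η ∈ A ↔ η' ∈ A)

/-! ### Translations -/

/-- Translation of configurations by the vector `u`. -/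
def shift (u : V) (ω : Config) : Config :=
  (fun a b => ω.1 (a + u) (b + u), fun a => ω.2 (a + u))

end DaC
namespace DaC

/-! ### Combinatorics: the game of Y -/

/-- The triangular board. -/
def TB (N : ℤ) : Set V := {v | 0 ≤ v.1 ∧ 0 ≤ v.2 ∧ v.1 + v.2 ≤ N}

/-- Adjacency with antidiagonals. -/
def adj6 (u v : V) : Prop :=
  (v.1 = u.1 + 1 ∧ v.2 = u.2) ∨ (v.1 = u.1 - 1 ∧ v.2 = u.2) ∨
  (v.1 = u.1 ∧ v.2 = u.2 + 1) ∨ (v.1 = u.1 ∧ v.2 = u.2 - 1) ∨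
  (v.1 = u.1 + 1 ∧ v.2 = u.2 - 1) ∨ (v.1 = u.1 - 1 ∧ v.2 = u.2 + 1)

/-- One step of a monochromatic path on the board. -/
def YR (N : ℤ) (ζ : V → Bool) (c : Bool) (u v : V) : Prop :=
  adj6 u v ∧ (u ∈ TB N ∧ v ∈ TB N) ∧ (ζ u = c ∧ ζ v = c)

/-- Colour `c` wins the game of Y. -/
def HasY (N : ℤ) (ζ : V → Bool) (c : Bool) : Prop :=
  ∃ a b d : V, a ∈ TB N ∧ ζ a = c ∧ a.1 = 0 ∧ Relation.ReflTransGen (YR N ζ c) a b ∧ b.2 = 0 ∧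
    Relation.ReflTransGen (YR N ζ c) a d ∧ d.1 + d.2 = N

/-- The majority reduction. -/
def red (ζ : V → Bool) (v : V) : Bool :=
  (ζ v && ζ (v.1 + 1, v.2)) || (ζ v && ζ (v.1, v.2 + 1)) ||
    (ζ (v.1 + 1, v.2) && ζ (v.1, v.2 + 1))

/-- `w` is a vertex of the up-triangle at `v`. -/
def inTri (v w : V) : Prop := w = v ∨ w = (v.1 + 1, v.2) ∨ w = (v.1, v.2 + 1)

lemma red_two (ζ : V → Bool) (c : Bool) (v : V) (h : red ζ v = c) :
    (ζ v = c ∧ ζ (v.1 + 1, v.2) = c) ∨ (ζ v = c ∧ ζ (v.1, v.2 + 1) = c) ∨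
      (ζ (v.1 + 1, v.2) = c ∧ ζ (v.1, v.2 + 1) = c) := by
  unfold red at h
  revert h
  generalize ζ v = x
  generalize ζ (v.1 + 1, v.2) = y
  generalize ζ (v.1, v.2 + 1) = z
  revert x y z c
  decide

lemma two_red (ζ : V → Bool) (c : Bool) (v : V)
    (h : (ζ v = c ∧ ζ (v.1 + 1, v.2) = c) ∨ (ζ v = c ∧ ζ (v.1, v.2 + 1) = c) ∨
      (ζ (v.1 + 1, v.2) = c ∧ ζ (v.1, v.2 + 1) = c)) : red ζ v = c := by
  unfold red
  revert h
  generalize ζ v = x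
  generalize ζ (v.1 + 1, v.2) = y
  generalize ζ (v.1, v.2 + 1) = z
  revert x y z c
  decide

lemma inTri_adj {v w w' : V} (h : inTri v w) (h' : inTri v w') : w = w' ∨ adj6 w w' := by
  obtain ⟨a, b⟩ := v
  rcases h with rfl | rfl | rfl <;> rcases h' with rfl | rfl | rfl <;> simp [adj6]

lemma inTri_TB {N : ℤ} {v w : V} (hv : v ∈ TB N) (h : inTri v w) : w ∈ TB (N + 1) := by
  simp only [TB, Set.mem_ofPred_eq] at *
  rcases h with rfl | rfl | rfl <;> (try simp only) <;> omega

lemma red_link (ζ : V → Bool) (c : Bool) {v v' : V} (h : adj6 v v') (hv : red ζ v = c)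
    (hv' : red ζ v' = c) : ∃ x y, inTri v x ∧ inTri v' y ∧ ζ x = c ∧ ζ y = c ∧
      (x = y ∨ adj6 x y) := by
  have h1 := red_two ζ c v hv
  have h2 := red_two ζ c v' hv'
  obtain ⟨a, b⟩ := v
  obtain ⟨a', b'⟩ := v'
  simp only [adj6] at h h1 h2
  rcases h with ⟨rfl, rfl⟩ | ⟨rfl, rfl⟩ | ⟨rfl, rfl⟩ | ⟨rfl, rfl⟩ | ⟨rfl, rfl⟩ | ⟨rfl, rfl⟩ <;>
  rcases h1 with ⟨p1, p2⟩ | ⟨p1, p2⟩ | ⟨p1, p2⟩ <;>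
  rcases h2 with ⟨q1, q2⟩ | ⟨q1, q2⟩ | ⟨q1, q2⟩ <;>
  first
  | (refine ⟨_, _, ?_, ?_, p1, q1, ?_⟩ <;> simp [inTri, adj6] <;> omega)
  | (refine ⟨_, _, ?_, ?_, p1, q2, ?_⟩ <;> simp [inTri, adj6] <;> omega)
  | (refine ⟨_, _, ?_, ?_, p2, q1, ?_⟩ <;> simp [inTri, adj6] <;> omega)
  | (refine ⟨_, _, ?_, ?_, p2, q2, ?_⟩ <;> simp [inTri, adj6] <;> omega)

lemma up_conn {N : ℤ} {ζ : V → Bool} {c : Bool} {v v' : V}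
    (h : Relation.ReflTransGen (YR N (red ζ) c) v v') (hv : v ∈ TB N) :
    v' ∈ TB N ∧ ∀ w w', inTri v w → inTri v' w' → ζ w = c → ζ w' = c →
      Relation.ReflTransGen (YR (N + 1) ζ c) w w' := by
  have key : ∀ {x w w' : V}, x ∈ TB N → inTri x w → inTri x w' → ζ w = c → ζ w' = c →
      Relation.ReflTransGen (YR (N + 1) ζ c) w w' := by
    intro x w w' hx h1 h2 h3 h4
    rcases inTri_adj h1 h2 with rfl | h5
    · exact .refl
    · exact .single ⟨h5, ⟨inTri_TB hx h1, inTri_TB hx h2⟩, h3, h4⟩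
  induction h with
  | refl => exact ⟨hv, fun w w' h1 h2 h3 h4 => key hv h1 h2 h3 h4⟩
  | tail _ hs ih =>
    obtain ⟨hadj, ⟨hb, hc⟩, h3, h4⟩ := hs
    refine ⟨hc, fun w w' h1 h2 h5 h6 => ?_⟩
    obtain ⟨x, y, hx, hy, hxc, hyc, hxy⟩ := red_link ζ c hadj h3 h4
    refine ((ih.2 w x h1 hx h5 hxc).trans ?_).trans (key hc hy h2 hyc h6)
    rcases hxy with rfl | h7
    · exact .refl
    · exact .single ⟨h7, ⟨inTri_TB hb hx, inTri_TB hc hy⟩, hxc, hyc⟩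

lemma RTG_col {N : ℤ} {ζ : V → Bool} {c : Bool} {v v' : V}
    (h : Relation.ReflTransGen (YR N ζ c) v v') (hv : ζ v = c) : ζ v' = c := by
  induction h with
  | refl => exact hv
  | tail _ hs ih => exact hs.2.2.2

lemma RTG_TB {N : ℤ} {ζ : V → Bool} {c : Bool} {v v' : V}
    (h : Relation.ReflTransGen (YR N ζ c) v v') (hv : v ∈ TB N) : v' ∈ TB N := by
  induction h with
  | refl => exact hv
  | tail _ hs ih => exact hs.2.1.2

lemma hasY_up {N : ℤ} {ζ : V → Bool} {c : Bool} (h : HasY N (red ζ) c) : HasY (N + 1) ζ c := by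
  obtain ⟨a, b, d, ha, hac, ha1, hab, hb2, had, hd⟩ := h
  obtain ⟨a', ha', hac', ha1'⟩ : ∃ w, inTri a w ∧ ζ w = c ∧ w.1 = 0 := by
    rcases red_two ζ c a hac with ⟨h1, h2⟩ | ⟨h1, h2⟩ | ⟨h1, h2⟩
    · exact ⟨_, by simp [inTri], h1, ha1⟩
    · exact ⟨_, by simp [inTri], h1, ha1⟩
    · exact ⟨_, by simp [inTri], h2, ha1⟩
  obtain ⟨b', hb', hbc', hb2'⟩ : ∃ w, inTri b w ∧ ζ w = c ∧ w.2 = 0 := by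
    rcases red_two ζ c b (RTG_col hab hac) with ⟨h1, h2⟩ | ⟨h1, h2⟩ | ⟨h1, h2⟩
    · exact ⟨_, by simp [inTri], h1, hb2⟩
    · exact ⟨_, by simp [inTri], h1, hb2⟩
    · exact ⟨_, by simp [inTri], h1, hb2⟩
  obtain ⟨d', hd', hdc', hd2'⟩ : ∃ w, inTri d w ∧ ζ w = c ∧ w.1 + w.2 = N + 1 := by
    rcases red_two ζ c d (RTG_col had hac) with ⟨h1, h2⟩ | ⟨h1, h2⟩ | ⟨h1, h2⟩
    · exact ⟨_, by simp [inTri], h2, by simp only; omega⟩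
    · exact ⟨_, by simp [inTri], h2, by simp only; omega⟩
    · exact ⟨_, by simp [inTri], h2, by simp only; omega⟩
  exact ⟨a', b', d', inTri_TB ha ha', hac', ha1', (up_conn hab ha).2 _ _ ha' hb' hac' hbc', hb2',
    (up_conn had ha).2 _ _ ha' hd' hac' hdc', hd2'⟩

lemma cell_of_edge {N : ℤ} {ζ : V → Bool} {c : Bool} {u v : V} (h : YR (N + 1) ζ c u v) :
    ∃ t, t ∈ TB N ∧ inTri t u ∧ inTri t v ∧ red ζ t = c := by
  obtain ⟨h, ⟨hu, hv⟩, cu, cv⟩ := h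
  obtain ⟨a, b⟩ := u
  obtain ⟨a', b'⟩ := v
  simp only [adj6] at h
  simp only [TB, Set.mem_ofPred_eq] at hu hv
  rcases h with ⟨rfl, rfl⟩ | ⟨rfl, rfl⟩ | ⟨rfl, rfl⟩ | ⟨rfl, rfl⟩ | ⟨rfl, rfl⟩ | ⟨rfl, rfl⟩
  · exact ⟨(a, b'), by simp only [TB, Set.mem_ofPred_eq]; omega, by simp [inTri], by simp [inTri],
      two_red _ _ _ (by simp [cu, cv])⟩
  · exact ⟨(a - 1, b'), by simp only [TB, Set.mem_ofPred_eq]; omega, by simp [inTri],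
      by simp [inTri], two_red _ _ _ (by simp [cu, cv])⟩
  · exact ⟨(a', b), by simp only [TB, Set.mem_ofPred_eq]; omega, by simp [inTri], by simp [inTri],
      two_red _ _ _ (by simp [cu, cv])⟩
  · exact ⟨(a', b - 1), by simp only [TB, Set.mem_ofPred_eq]; omega, by simp [inTri],
      by simp [inTri], two_red _ _ _ (by simp [cu, cv])⟩
  · exact ⟨(a, b - 1), by simp only [TB, Set.mem_ofPred_eq]; omega, by simp [inTri],
      by simp [inTri], two_red _ _ _ (by simp [cu, cv])⟩
  · exact ⟨(a - 1, b), by simp only [TB, Set.mem_ofPred_eq]; omega, by simp [inTri],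
      by simp [inTri], two_red _ _ _ (by simp [cu, cv])⟩

lemma cells_adj {t t' w : V} (h : inTri t w) (h' : inTri t' w) : t = t' ∨ adj6 t t' := by
  obtain ⟨a, b⟩ := t
  obtain ⟨a', b'⟩ := t'
  obtain ⟨x, y⟩ := w
  simp only [inTri, adj6, Prod.mk.injEq] at *
  omega

lemma down_conn {N : ℤ} {ζ : V → Bool} {c : Bool} {a b t : V}
    (h : Relation.ReflTransGen (YR (N + 1) ζ c) a b) (ht : t ∈ TB N) (hta : inTri t a)
    (htc : red ζ t = c) :
    ∃ t', t' ∈ TB N ∧ inTri t' b ∧ red ζ t' = c ∧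
      Relation.ReflTransGen (YR N (red ζ) c) t t' := by
  induction h with
  | refl => exact ⟨t, ht, hta, htc, .refl⟩
  | tail _ hs ih =>
    obtain ⟨t', h1, h2, h3, h4⟩ := ih
    obtain ⟨s, g1, g2, g3, g4⟩ := cell_of_edge hs
    refine ⟨s, g1, g3, g4, ?_⟩
    rcases cells_adj h2 g2 with rfl | h5
    · exact h4
    · exact h4.tail ⟨h5, ⟨h1, g1⟩, h3, g4⟩

lemma hasY_down {N : ℤ} (hN : 0 ≤ N) {ζ : V → Bool} {c : Bool} (h : HasY (N + 1) ζ c) :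
    HasY N (red ζ) c := by
  obtain ⟨a, b, d, ha, hac, ha1, hab, hb2, had, hd⟩ := h
  obtain ⟨t, ht, hta, htc⟩ : ∃ t, t ∈ TB N ∧ inTri t a ∧ red ζ t = c := by
    rcases hab.cases_head with rfl | ⟨x, hx, -⟩
    · rcases had.cases_head with rfl | ⟨x, hx, -⟩
      · omega
      · obtain ⟨t, h1, h2, -, h3⟩ := cell_of_edge hx
        exact ⟨t, h1, h2, h3⟩
    · obtain ⟨t, h1, h2, -, h3⟩ := cell_of_edge hx
      exact ⟨t, h1, h2, h3⟩
  obtain ⟨tb, h1, h2, h3, h4⟩ := down_conn hab ht hta htc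
  obtain ⟨td, g1, g2, g3, g4⟩ := down_conn had ht hta htc
  refine ⟨t, tb, td, ht, htc, ?_, h4, ?_, g4, ?_⟩
  · simp only [inTri, TB, Set.mem_ofPred_eq, Prod.ext_iff] at *; omega
  · simp only [inTri, TB, Set.mem_ofPred_eq, Prod.ext_iff] at *; omega
  · simp only [inTri, TB, Set.mem_ofPred_eq, Prod.ext_iff] at *; omega

lemma hasY_zero (ζ : V → Bool) (c : Bool) : HasY 0 ζ c ↔ ζ (0, 0) = c := by
  constructor
  · rintro ⟨⟨a1, a2⟩, b, d, ha, hac, -⟩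
    simp only [TB, Set.mem_ofPred_eq] at ha
    have : a1 = 0 := by omega
    have : a2 = 0 := by omega
    subst a1 a2
    exact hac
  · intro h
    exact ⟨(0, 0), (0, 0), (0, 0), by simp [TB], h, rfl, .refl, rfl, .refl, rfl⟩

/-- Exactly one player wins the game of Y. -/
lemma hasY_iff (N : ℕ) (ζ : V → Bool) : HasY N ζ true ↔ ¬ HasY N ζ false := by
  induction N generalizing ζ with
  | zero => simp [hasY_zero]
  | succ k ih =>
    have e : ∀ c, HasY ((k + 1 : ℕ) : ℤ) ζ c ↔ HasY k (red ζ) c := by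
      intro c
      push_cast
      exact ⟨hasY_down (by positivity), hasY_up⟩
    rw [e, e, ih]

/-! ### Crossings of the rhombus -/

/-- One step of a good path in a region. -/
def CR (adj : V → V → Prop) (good : V → Prop) (R : Set V) (u v : V) : Prop :=
  adj u v ∧ (u ∈ R ∧ good u) ∧ (v ∈ R ∧ good v)

lemma crossing_iff (adj : V → V → Prop) (good : V → Prop) (R A B : Set V) :
    HasCrossing adj good R A B ↔
      ∃ a b, a ∈ A ∧ b ∈ B ∧ a ∈ R ∧ good a ∧ Relation.ReflTransGen (CR adj good R) a b := by
  constructor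
  · rintro ⟨k, f, h1, h2, h3, h4⟩
    refine ⟨f 0, f (Fin.last k), h3, h4, (h1 0).1, (h1 0).2, ?_⟩
    have : ∀ i, Relation.ReflTransGen (CR adj good R) (f 0) (f i) := by
      intro i
      induction i using Fin.induction with
      | zero => exact .refl
      | succ i ih => exact ih.tail ⟨h2 i, h1 _, h1 _⟩
    exact this _
  · rintro ⟨a, b, ha, hb, haR, hag, h⟩
    have : ∃ (k : ℕ) (f : Fin (k + 1) → V), (∀ i, f i ∈ R ∧ good (f i)) ∧
        (∀ i : Fin k, adj (f i.castSucc) (f i.succ)) ∧ f 0 = a ∧ f (Fin.last k) = b := by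
      clear hb
      induction h with
      | refl => exact ⟨0, fun _ => a, fun _ => ⟨haR, hag⟩, fun i => i.elim0, rfl, rfl⟩
      | @tail x y _ hs ih =>
        obtain ⟨k, f, h1, h2, h3, h4⟩ := ih
        refine ⟨k + 1, Fin.snoc (α := fun _ => V) f y, ?_, ?_, ?_, ?_⟩
        · intro i
          induction i using Fin.lastCases with
          | last => simpa using hs.2.2
          | cast i => simpa using h1 i
        · intro i
          induction i using Fin.lastCases with
          | last =>
            rw [Fin.succ_last, Fin.snoc_last, Fin.snoc_castSucc, h4]
            exact hs.1
          | cast i =>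
            rw [Fin.succ_castSucc, Fin.snoc_castSucc, Fin.snoc_castSucc]
            exact h2 i
        · rw [← Fin.castSucc_zero, Fin.snoc_castSucc, h3]
        · rw [Fin.snoc_last]
    obtain ⟨k, f, h1, h2, h3, h4⟩ := this
    exact ⟨k, f, h1, h2, h3 ▸ ha, h4 ▸ hb⟩

/-- The colouring of the big triangle extending the one of the rhombus. -/
def zeta (n : ℕ) (ξ : ColourCfg) (v : V) : Bool :=
  if (n : ℤ) < v.2 then true else if (n : ℤ) < v.1 then false else ξ (v.1, n - v.2)

/-- Change of coordinates. -/
def phi (n : ℕ) (v : V) : V := (v.1, n - v.2)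

lemma rtg_symm {α : Type*} {r : α → α → Prop} (hr : ∀ a b, r a b → r b a) {a b : α}
    (h : Relation.ReflTransGen r a b) : Relation.ReflTransGen r b a := by
  induction h with
  | refl => exact .refl
  | tail _ hs ih => exact .head (hr _ _ hs) ih

lemma mem_vert (adj : V → V → Prop) (n m : ℕ) (ξ : ColourCfg) : ξ ∈ VertBC adj n m ↔
    HasCrossing adj (fun v => ξ v = true) (Rect n m) (TopSide n m) (BotSide n m) := Iff.rfl

lemma YR_symm {N : ℤ} {ζ : V → Bool} {c : Bool} {u v : V} (h : YR N ζ c u v) : YR N ζ c v u := by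
  refine ⟨?_, h.2.1.symm, h.2.2.symm⟩
  have := h.1
  simp only [adj6] at *
  omega

lemma YRTG_symm {N : ℤ} {ζ : V → Bool} {c : Bool} {u v : V}
    (h : Relation.ReflTransGen (YR N ζ c) u v) : Relation.ReflTransGen (YR N ζ c) v u :=
  rtg_symm (fun _ _ h => YR_symm h) h

lemma triAdj_phi {n : ℕ} {u v : V} (h : adj6 u v) : TriAdj (phi n u) (phi n v) := by
  simp only [adj6, TriAdj, phi, Set.mem_insert_iff, Set.mem_singleton_iff, Prod.mk.injEq] at *
  omega

lemma adj6_phi {n : ℕ} {u v : V} (h : TriAdj u v) : adj6 (phi n u) (phi n v) := by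
  simp only [adj6, TriAdj, phi, Set.mem_insert_iff, Set.mem_singleton_iff, Prod.mk.injEq] at *
  omega

lemma phi_TB {n : ℕ} {v : V} (h : v ∈ Rect n n) : phi n v ∈ TB ((2 * n : ℕ) : ℤ) := by
  simp only [Rect, TB, phi, Set.mem_ofPred_eq] at *
  push_cast
  omega

lemma zeta_phi {n : ℕ} {ξ : ColourCfg} {v : V} (h : v ∈ Rect n n) : zeta n ξ (phi n v) = ξ v := by
  simp only [Rect, Set.mem_ofPred_eq] at h
  unfold zeta phi
  rw [if_neg (by simp only; omega), if_neg (by simp only; omega)]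
  simp

lemma lift_phi {n : ℕ} {ξ : ColourCfg} {c : Bool} {a b : V}
    (h : Relation.ReflTransGen (CR TriAdj (fun v => ξ v = c) (Rect n n)) a b) :
    Relation.ReflTransGen (YR ((2 * n : ℕ) : ℤ) (zeta n ξ) c) (phi n a) (phi n b) := by
  refine Relation.ReflTransGen.lift (p := YR ((2 * n : ℕ) : ℤ) (zeta n ξ) c) (phi n) ?_ _ _ h
  rintro u v ⟨h1, h2, h3⟩
  exact ⟨adj6_phi h1, ⟨phi_TB h2.1, phi_TB h3.1⟩, by rw [zeta_phi h2.1]; exact h2.2,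
    by rw [zeta_phi h3.1]; exact h3.2⟩

lemma zeta_cases {n : ℕ} {ξ : ColourCfg} {c : Bool} {v : V} (hv : v ∈ TB ((2 * n : ℕ) : ℤ))
    (h : zeta n ξ v = c) : (c = true ∧ (n : ℤ) < v.2) ∨ (c = false ∧ (n : ℤ) < v.1) ∨
      (phi n v ∈ Rect n n ∧ ξ (phi n v) = c) := by
  simp only [TB, Set.mem_ofPred_eq] at hv
  unfold zeta at h
  split_ifs at h with h1 h2
  · exact Or.inl ⟨h.symm, h1⟩
  · exact Or.inr (Or.inl ⟨h.symm, h2⟩)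
  · refine Or.inr (Or.inr ⟨?_, h⟩)
    simp only [Rect, phi, Set.mem_ofPred_eq]
    omega

/-- The black player's win gives a vertical crossing. -/
lemma Y_to_vert {n : ℕ} {ξ : ColourCfg} (h : HasY ((2 * n : ℕ) : ℤ) (zeta n ξ) true) :
    ξ ∈ VertBC TriAdj n n := by
  obtain ⟨a, b, d, ha, hac, -, hab, hb2, had, hd⟩ := h
  have hb := RTG_TB hab ha
  have hbc := RTG_col hab hac
  have hdT := RTG_TB had ha
  have hdc := RTG_col had hac
  have hbd := (YRTG_symm hab).trans had
  have hbR : phi n b ∈ Rect n n ∧ ξ (phi n b) = true := by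
    rcases zeta_cases hb hbc with h | h | h
    · omega
    · simp at h
    · exact h
  have hdn : (n : ℤ) ≤ d.2 := by
    rcases zeta_cases hdT hdc with h | h | h
    · omega
    · simp at h
    · have := h.1
      simp only [Rect, phi, Set.mem_ofPred_eq] at this
      push_cast at hd
      omega
  have key : (∃ e, e ∈ BotSide n n ∧
      Relation.ReflTransGen (CR TriAdj (fun v => ξ v = true) (Rect n n)) (phi n b) e) ∨
      (d.2 < n ∧ (phi n d ∈ Rect n n ∧ ξ (phi n d) = true) ∧
        Relation.ReflTransGen (CR TriAdj (fun v => ξ v = true) (Rect n n)) (phi n b) (phi n d)) := by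
    clear hdn hdc hdT had hd
    induction hbd with
    | refl =>
      by_cases hn : n = 0
      · refine Or.inl ⟨phi n b, ⟨hbR.1, ?_⟩, .refl⟩
        simp [phi, hb2, hn]
      · exact Or.inr ⟨by omega, hbR, .refl⟩
    | @tail x y _ hs ih =>
      rcases ih with h | ⟨h1, h2, h3⟩
      · exact Or.inl h
      · have hadj := hs.1
        have hy2 : y.2 ≤ n := by
          simp only [adj6] at hadj
          omega
        have hyR : phi n y ∈ Rect n n ∧ ξ (phi n y) = true := by
          rcases zeta_cases hs.2.1.2 hs.2.2.2 with h | h | h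
          · omega
          · simp at h
          · exact h
        have h4 := h3.tail ⟨triAdj_phi hadj, h2, hyR⟩
        rcases hy2.lt_or_eq with h5 | h5
        · exact Or.inr ⟨h5, hyR, h4⟩
        · exact Or.inl ⟨_, ⟨hyR.1, by simp [phi, h5]⟩, h4⟩
  refine ((mem_vert _ _ _ _).trans (crossing_iff _ _ _ _ _)).2 ?_
  rcases key with ⟨e, he, h⟩ | h
  · exact ⟨phi n b, e, ⟨hbR.1, by simp [phi, hb2]⟩, he, hbR.1, hbR.2, h⟩
  · omega

/-- The white player's win gives a horizontal crossing. -/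
lemma Y_to_horiz {n : ℕ} {ξ : ColourCfg} (h : HasY ((2 * n : ℕ) : ℤ) (zeta n ξ) false) :
    HasCrossing TriAdj (fun v => ξ v = false) (Rect n n) (LeftSide n n) (RightSide n n) := by
  obtain ⟨a, b, d, ha, hac, ha1, -, -, had, hd⟩ := h
  have hdT := RTG_TB had ha
  have hdc := RTG_col had hac
  have haR : phi n a ∈ Rect n n ∧ ξ (phi n a) = false := by
    rcases zeta_cases ha hac with h | h | h
    · simp at h
    · omega
    · exact h
  have hdn : (n : ℤ) ≤ d.1 := by
    rcases zeta_cases hdT hdc with h | h | h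
    · simp at h
    · omega
    · have := h.1
      simp only [Rect, phi, Set.mem_ofPred_eq] at this
      push_cast at hd
      omega
  have key : (∃ e, e ∈ RightSide n n ∧
      Relation.ReflTransGen (CR TriAdj (fun v => ξ v = false) (Rect n n)) (phi n a) e) ∨
      (d.1 < n ∧ (phi n d ∈ Rect n n ∧ ξ (phi n d) = false) ∧
        Relation.ReflTransGen (CR TriAdj (fun v => ξ v = false) (Rect n n)) (phi n a) (phi n d)) := by
    clear hdn hdc hdT hd
    induction had with
    | refl =>
      by_cases hn : n = 0
      · refine Or.inl ⟨phi n a, ⟨haR.1, ?_⟩, .refl⟩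
        simp [phi, ha1, hn]
      · exact Or.inr ⟨by omega, haR, .refl⟩
    | @tail x y _ hs ih =>
      rcases ih with h | ⟨h1, h2, h3⟩
      · exact Or.inl h
      · have hadj := hs.1
        have hy2 : y.1 ≤ n := by
          simp only [adj6] at hadj
          omega
        have hyR : phi n y ∈ Rect n n ∧ ξ (phi n y) = false := by
          rcases zeta_cases hs.2.1.2 hs.2.2.2 with h | h | h
          · simp at h
          · omega
          · exact h
        have h4 := h3.tail ⟨triAdj_phi hadj, h2, hyR⟩
        rcases hy2.lt_or_eq with h5 | h5
        · exact Or.inr ⟨h5, hyR, h4⟩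
        · exact Or.inl ⟨_, ⟨hyR.1, by simp [phi, h5]⟩, h4⟩
  refine (crossing_iff _ _ _ _ _).2 ?_
  rcases key with ⟨e, he, h⟩ | h
  · exact ⟨phi n a, e, ⟨haR.1, by simp [phi, ha1]⟩, he, haR.1, haR.2, h⟩
  · omega

lemma row_conn (n : ℕ) (ξ : ColourCfg) (m : ℕ) (hm : m < n) :
    Relation.ReflTransGen (YR ((2 * n : ℕ) : ℤ) (zeta n ξ) true) (0, (n : ℤ) + 1)
      ((m : ℤ), (n : ℤ) + 1) := by
  induction m with
  | zero => exact .refl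
  | succ k ih =>
    refine (ih (by omega)).tail ⟨?_, ⟨?_, ?_⟩, ?_, ?_⟩
    · simp [adj6]
    · simp only [TB, Set.mem_ofPred_eq]; push_cast; omega
    · simp only [TB, Set.mem_ofPred_eq]; push_cast; omega
    · simp [zeta]
    · simp [zeta]

lemma col_conn (n : ℕ) (ξ : ColourCfg) (m : ℕ) (hm : m < n) :
    Relation.ReflTransGen (YR ((2 * n : ℕ) : ℤ) (zeta n ξ) false) ((n : ℤ) + 1, 0)
      ((n : ℤ) + 1, (m : ℤ)) := by
  induction m with
  | zero => exact .refl
  | succ k ih =>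
    refine (ih (by omega)).tail ⟨?_, ⟨?_, ?_⟩, ?_, ?_⟩
    · simp [adj6]
    · simp only [TB, Set.mem_ofPred_eq]; push_cast; omega
    · simp only [TB, Set.mem_ofPred_eq]; push_cast; omega
    · unfold zeta; rw [if_neg (by simp only; omega), if_pos (by simp)]
    · unfold zeta; rw [if_neg (by simp only; push_cast; omega), if_pos (by simp)]

lemma vert_to_Y {n : ℕ} {ξ : ColourCfg} (h : ξ ∈ VertBC TriAdj n n) :
    HasY ((2 * n : ℕ) : ℤ) (zeta n ξ) true := by
  obtain ⟨a, b, ha, hb, haR, hac, hab⟩ := ((mem_vert _ _ _ _).trans (crossing_iff _ _ _ _ _)).1 h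
  have hY := lift_phi hab
  have hbR := hb.1
  have hb2 := hb.2
  have ha2 : (phi n a).2 = 0 := by simp [phi, ha.2]
  have haT := phi_TB haR
  have hac' : zeta n ξ (phi n a) = true := by rw [zeta_phi haR]; exact hac
  have hbT := RTG_TB hY haT
  have hbc := RTG_col hY hac'
  have hR := hbR
  simp only [Rect, Set.mem_ofPred_eq] at hR
  rcases Nat.eq_zero_or_pos n with rfl | hn
  · refine ⟨phi 0 a, phi 0 a, phi 0 a, haT, hac', ?_, .refl, ha2, .refl, ?_⟩ <;>
    · simp only [Rect, phi, Set.mem_ofPred_eq] at *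
      push_cast at *
      omega
  · obtain ⟨m, hm, hadj⟩ : ∃ m : ℕ, m < n ∧ adj6 ((m : ℤ), (n : ℤ) + 1) (phi n b) := by
      by_cases h : b.1 < n
      · refine ⟨b.1.toNat, by omega, ?_⟩
        simp only [adj6, phi]; omega
      · refine ⟨n - 1, by omega, ?_⟩
        simp only [adj6, phi]; omega
    refine ⟨(0, (n : ℤ) + 1), phi n a, (((n - 1 : ℕ) : ℤ), (n : ℤ) + 1), ?_, ?_, rfl, ?_, ha2,
      row_conn n ξ (n - 1) (by omega), ?_⟩
    · refine ⟨le_rfl, ?_, ?_⟩ <;> (simp only; push_cast; omega)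
    · simp [zeta]
    · refine ((row_conn n ξ m hm).tail ⟨hadj, ⟨?_, hbT⟩, ?_, hbc⟩).trans (YRTG_symm hY)
      · simp only [TB, Set.mem_ofPred_eq]; push_cast; omega
      · simp [zeta]
    · simp only; push_cast; omega

lemma horiz_to_Y {n : ℕ} {ξ : ColourCfg}
    (h : HasCrossing TriAdj (fun v => ξ v = false) (Rect n n) (LeftSide n n) (RightSide n n)) :
    HasY ((2 * n : ℕ) : ℤ) (zeta n ξ) false := by
  obtain ⟨a, b, ha, hb, haR, hac, hab⟩ := (crossing_iff _ _ _ _ _).1 h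
  have hY := lift_phi hab
  have hbR := hb.1
  have hb1 := hb.2
  have ha1 : (phi n a).1 = 0 := by simp [phi, ha.2]
  have haT := phi_TB haR
  have hac' : zeta n ξ (phi n a) = false := by rw [zeta_phi haR]; exact hac
  have hbT := RTG_TB hY haT
  have hbc := RTG_col hY hac'
  have hR := hbR
  simp only [Rect, Set.mem_ofPred_eq] at hR
  rcases Nat.eq_zero_or_pos n with rfl | hn
  · refine ⟨phi 0 a, phi 0 a, phi 0 a, haT, hac', ha1, .refl, ?_, .refl, ?_⟩ <;>
    · simp only [Rect, phi, Set.mem_ofPred_eq] at *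
      push_cast at *
      omega
  · obtain ⟨m, hm, hadj⟩ : ∃ m : ℕ, m < n ∧ adj6 (phi n b) ((n : ℤ) + 1, (m : ℤ)) := by
      by_cases h : 0 < b.2
      · refine ⟨n - b.2.toNat, by omega, ?_⟩
        simp only [adj6, phi]; omega
      · refine ⟨n - 1, by omega, ?_⟩
        simp only [adj6, phi]; omega
    have hm' : Relation.ReflTransGen (YR ((2 * n : ℕ) : ℤ) (zeta n ξ) false) (phi n a)
        ((n : ℤ) + 1, (m : ℤ)) := by
      refine hY.tail ⟨hadj, ⟨hbT, ?_⟩, hbc, ?_⟩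
      · simp only [TB, Set.mem_ofPred_eq]; push_cast; omega
      · unfold zeta; rw [if_neg (by simp only; omega), if_pos (by simp)]
    have h0 := hm'.trans (YRTG_symm (col_conn n ξ m hm))
    refine ⟨phi n a, ((n : ℤ) + 1, 0), ((n : ℤ) + 1, ((n - 1 : ℕ) : ℤ)), haT, hac', ha1, h0, rfl,
      h0.trans (col_conn n ξ (n - 1) (by omega)), ?_⟩
    simp only; push_cast; omega

/-- The Hex theorem: exactly one of the two crossings exists. -/
lemma hex_theorem (n : ℕ) (ξ : ColourCfg) :
    ξ ∈ VertBC TriAdj n n ↔ ¬ HasCrossing TriAdj (fun v => ξ v = false) (Rect n n)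
      (LeftSide n n) (RightSide n n) := by
  have h := hasY_iff (2 * n) (zeta n ξ)
  constructor
  · exact fun h1 h2 => h.1 (vert_to_Y h1) (horiz_to_Y h2)
  · intro h1
    exact Y_to_vert (h.2 fun h2 => h1 (Y_to_horiz h2))

lemma crossing_mono_iff {adj : V → V → Prop} {good good' : V → Prop} {R A B : Set V}
    (h : ∀ v ∈ R, good v ↔ good' v) :
    HasCrossing adj good R A B ↔ HasCrossing adj good' R A B := by
  constructor
  · rintro ⟨k, f, h1, h2⟩
    exact ⟨k, f, fun i => ⟨(h1 i).1, (h _ (h1 i).1).1 (h1 i).2⟩, h2⟩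
  · rintro ⟨k, f, h1, h2⟩
    exact ⟨k, f, fun i => ⟨(h1 i).1, (h _ (h1 i).1).2 (h1 i).2⟩, h2⟩

/-- Duality in the form used below. -/
lemma flip_swap_mem (n : ℕ) (ξ : ColourCfg) :
    (fun v : V => !ξ v.swap) ∈ VertBC TriAdj n n ↔ ξ ∉ VertBC TriAdj n n := by
  rw [hex_theorem n ξ, not_not]
  have rev : ∀ ξ' : ColourCfg, HasCrossing TriAdj (fun v => ξ' v = false) (Rect n n)
      (LeftSide n n) (RightSide n n) ↔ HasCrossing TriAdj (fun v => ξ' v = false) (Rect n n)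
      (RightSide n n) (LeftSide n n) := by
    have symm : ∀ ξ' : ColourCfg, ∀ a b, Relation.ReflTransGen
        (CR TriAdj (fun v => ξ' v = false) (Rect n n)) a b → Relation.ReflTransGen
        (CR TriAdj (fun v => ξ' v = false) (Rect n n)) b a := by
      intro ξ' a b h
      refine rtg_symm ?_ h
      rintro u v ⟨h1, h2, h3⟩
      refine ⟨?_, h3, h2⟩
      simp only [TriAdj, Set.mem_insert_iff, Set.mem_singleton_iff, Prod.mk.injEq] at *
      omega
    have ends : ∀ ξ' : ColourCfg, ∀ a b, Relation.ReflTransGen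
        (CR TriAdj (fun v => ξ' v = false) (Rect n n)) a b → a ∈ Rect n n ∧ ξ' a = false →
        b ∈ Rect n n ∧ ξ' b = false := by
      intro ξ' a b h h0
      induction h with
      | refl => exact h0
      | tail _ hs _ => exact hs.2.2
    intro ξ'
    rw [crossing_iff, crossing_iff]
    constructor
    · rintro ⟨a, b, h1, h2, h3, h4, h5⟩
      have := ends _ _ _ h5 ⟨h3, h4⟩
      exact ⟨b, a, h2, h1, this.1, this.2, symm _ _ _ h5⟩
    · rintro ⟨a, b, h1, h2, h3, h4, h5⟩
      have := ends _ _ _ h5 ⟨h3, h4⟩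
      exact ⟨b, a, h2, h1, this.1, this.2, symm _ _ _ h5⟩
  rw [rev]
  have tri : ∀ u v : V, TriAdj u v → TriAdj u.swap v.swap := by
    intro u v h
    simp only [TriAdj, Set.mem_insert_iff, Set.mem_singleton_iff, Prod.mk.injEq, Prod.fst_swap,
      Prod.snd_swap] at *
    omega
  have rect : ∀ u : V, u ∈ Rect n n → u.swap ∈ Rect n n := by
    intro u h
    simp only [Rect, Set.mem_ofPred_eq, Prod.fst_swap, Prod.snd_swap] at *
    omega
  constructor
  · rintro ⟨k, f, h1, h2, h3, h4⟩
    exact ⟨k, fun i => (f i).swap, fun i => ⟨rect _ (h1 i).1, by simpa using (h1 i).2⟩,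
      fun i => tri _ _ (h2 i), ⟨rect _ h3.1, by simpa using h3.2⟩, ⟨rect _ h4.1, by simpa using h4.2⟩⟩
  · rintro ⟨k, f, h1, h2, h3, h4⟩
    exact ⟨k, fun i => (f i).swap, fun i => ⟨rect _ (h1 i).1, by simpa using (h1 i).2⟩,
      fun i => tri _ _ (h2 i), ⟨rect _ h3.1, by simpa using h3.2⟩, ⟨rect _ h4.1, by simpa using h4.2⟩⟩

/-! ### Binary digits -/

lemma boolOf_iff (P : Prop) : boolOf P = true ↔ P := by simp [boolOf]

lemma boolOf_congr {P Q : Prop} (h : P ↔ Q) : boolOf P = boolOf Q := by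
  rw [propext h]

lemma bit_eq (k : ℕ) (x : ℝ) : bit k x = boolOf (⌊x * 2 ^ (k + 1)⌋ % 2 = 1) := rfl

lemma floor_shift (k d : ℕ) (x : ℝ) :
    ⌊(x + 1 / 2 ^ (k + 1)) * 2 ^ (k + d + 1)⌋ = ⌊x * 2 ^ (k + d + 1)⌋ + 2 ^ d := by
  have : (x + 1 / 2 ^ (k + 1)) * 2 ^ (k + d + 1) = x * 2 ^ (k + d + 1) + ((2 ^ d : ℤ) : ℝ) := by
    have h2 : (2:ℝ) ^ (k+1) ≠ 0 := by positivity
    push_cast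
    rw [show k + d + 1 = (k + 1) + d by omega, pow_add _ (k + 1) d, add_mul, ← mul_assoc (1 / _),
      one_div_mul_cancel h2, one_mul]
  rw [this, Int.floor_add_intCast]

lemma floor_coarse (j d : ℕ) (x : ℝ) :
    ⌊x * 2 ^ (j + 1)⌋ = ⌊x * 2 ^ (j + d + 1)⌋ / 2 ^ d := by
  have : x * 2 ^ (j + 1) = (x * 2 ^ (j + d + 1)) / ((2 ^ d : ℕ) : ℝ) := by
    push_cast
    rw [show j + d + 1 = (j + 1) + d by omega, pow_add _ (j + 1) d, ← mul_assoc,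
      mul_div_cancel_right₀ _ (by positivity)]
  rw [this, Int.floor_div_natCast]
  push_cast
  rfl

lemma bit_shift_self (k : ℕ) (x : ℝ) : bit k (x + 1 / 2 ^ (k + 1)) = !bit k x := by
  have h := floor_shift k 0 x
  simp only [add_zero, pow_zero] at h
  rw [bit_eq, bit_eq, h, Bool.eq_iff_iff]
  simp only [boolOf_iff, Bool.not_eq_true', ← Bool.not_eq_true]
  omega

lemma bit_shift_ne (k j : ℕ) (hjk : j ≠ k) (x : ℝ) (hx : bit k x = false) :
    bit j (x + 1 / 2 ^ (k + 1)) = bit j x := by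
  rcases lt_or_gt_of_ne hjk with h | h
  · obtain ⟨d, rfl⟩ := Nat.exists_eq_add_of_lt h
    have h0 := floor_shift (j + d + 1) 0 x
    simp only [add_zero, pow_zero] at h0
    rw [← Bool.not_eq_true, bit_eq, boolOf_iff] at hx
    have e : ⌊(x + 1 / 2 ^ (j + d + 1 + 1)) * 2 ^ (j + 1)⌋ = ⌊x * 2 ^ (j + 1)⌋ := by
      rw [floor_coarse j (d + 1), floor_coarse j (d + 1), show j + (d + 1) + 1 = j + d + 1 + 1 by omega, h0,
        pow_succ' (2 : ℤ) d, ← Int.ediv_ediv_of_nonneg (by norm_num), ← Int.ediv_ediv_of_nonneg (by norm_num)]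
      congr 1
      omega
    rw [bit_eq, bit_eq, e]
  · obtain ⟨d, rfl⟩ := Nat.exists_eq_add_of_lt h
    have h0 := floor_shift k (d + 1) x
    rw [show k + (d + 1) = k + d + 1 by omega] at h0
    rw [bit_eq, bit_eq, h0]
    apply boolOf_congr
    rw [pow_succ]
    omega

lemma ico_iff_floor (k : ℕ) (x : ℝ) :
    x ∈ Set.Ico (0:ℝ) 1 ↔ 0 ≤ ⌊x * 2 ^ (k + 1)⌋ ∧ ⌊x * 2 ^ (k + 1)⌋ < 2 ^ (k + 1) := by
  have h2 : (0:ℝ) < 2 ^ (k+1) := by positivity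
  rw [Int.le_floor, Int.floor_lt, Set.mem_Ico]
  push_cast
  constructor
  · rintro ⟨a, b⟩; exact ⟨by positivity, by nlinarith⟩
  · rintro ⟨a, b⟩
    exact ⟨by by_contra h; push Not at h; nlinarith, by by_contra h; push Not at h; nlinarith⟩

lemma ico_shift (k : ℕ) (x : ℝ) (hx : bit k x = false) :
    x + 1 / 2 ^ (k + 1) ∈ Set.Ico (0:ℝ) 1 ↔ x ∈ Set.Ico (0:ℝ) 1 := by
  have h := floor_shift k 0 x
  simp only [add_zero, pow_zero] at h
  rw [← Bool.not_eq_true, bit_eq, boolOf_iff] at hx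
  rw [ico_iff_floor k, ico_iff_floor k, h, pow_succ (2 : ℤ) k]
  omega

lemma measurable_bit (k : ℕ) : Measurable (bit k) := by
  have h1 : Measurable (fun x : ℝ => ⌊x * 2 ^ (k + 1)⌋) :=
    Int.measurable_floor.comp (measurable_id.mul_const _)
  have h2 : Measurable (fun m : ℤ => boolOf (m % 2 = 1)) := measurable_from_top
  exact h2.comp h1

/-- Binary digit sequence. -/
noncomputable def Bits (x : ℝ) : ℕ → Bool := fun j => bit j x

lemma measurable_Bits : Measurable Bits := measurable_pi_lambda _ (fun j => measurable_bit j)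

lemma base_eq : base = volume.restrict (Set.Ico (0:ℝ) 1) := by
  unfold base
  exact Measure.restrict_congr_set Ico_ae_eq_Ioc.symm

instance : IsProbabilityMeasure base := ⟨by simp [base]⟩

/-- Events on bits other than `k` split evenly. -/
lemma base_split (s : Finset ℕ) (t : ℕ → Set Bool) (k : ℕ) (hk : k ∉ s) :
    base ({x | ∀ j ∈ s, bit j x ∈ t j} ∩ {x | bit k x = true}) =
      base ({x | ∀ j ∈ s, bit j x ∈ t j} ∩ {x | bit k x = false}) := by
  have ms : MeasurableSet {x | ∀ j ∈ s, bit j x ∈ t j} := by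
    have : {x | ∀ j ∈ s, bit j x ∈ t j} = ⋂ j ∈ s, bit j ⁻¹' (t j) := by
      ext x; simp
    rw [this]
    exact Finset.measurableSet_biInter _ (fun j _ => measurable_bit j (MeasurableSet.of_discrete))
  have mk : ∀ b, MeasurableSet {x | bit k x = b} := fun b => measurable_bit k (MeasurableSet.of_discrete (s := {b}))
  rw [base_eq, Measure.restrict_apply (ms.inter (mk _)), Measure.restrict_apply (ms.inter (mk _)),
    ← measure_preimage_add_right volume (1 / 2 ^ (k + 1) : ℝ)]
  congr 1
  ext x
  simp only [Set.mem_preimage, Set.mem_inter_iff, Set.mem_ofPred_eq, bit_shift_self, Bool.not_eq_true']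
  by_cases hx : bit k x = false
  · have : ∀ j ∈ s, bit j (x + 1 / 2 ^ (k + 1)) = bit j x := fun j hj =>
      bit_shift_ne k j (fun h => hk (h ▸ hj)) x hx
    rw [ico_shift k x hx]
    constructor
    · rintro ⟨⟨a, b⟩, c⟩; exact ⟨⟨fun j hj => this j hj ▸ a j hj, b⟩, c⟩
    · rintro ⟨⟨a, b⟩, c⟩; exact ⟨⟨fun j hj => (this j hj).symm ▸ a j hj, b⟩, c⟩
  · simp [hx]

/-- Fair coin. -/
noncomputable def coin : Measure Bool := (2⁻¹ : ℝ≥0∞) • Measure.count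

instance : IsProbabilityMeasure coin := ⟨by
  simp only [coin, Measure.smul_apply, Measure.count_univ, smul_eq_mul]
  simp only [ENat.card_eq_coe_fintype_card, Fintype.card_bool]
  exact ENNReal.inv_mul_cancel (by simp) (by simp)⟩

lemma coin_singleton (b : Bool) : coin {b} = 2⁻¹ := by
  simp [coin, Measure.smul_apply]

lemma base_split_coin (s : Finset ℕ) (t : ℕ → Set Bool) (k : ℕ) (hk : k ∉ s) (u : Set Bool) :
    base ({x | ∀ j ∈ s, bit j x ∈ t j} ∩ {x | bit k x ∈ u}) =
      coin u * base {x | ∀ j ∈ s, bit j x ∈ t j} := by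
  have h := base_split s t k hk
  set E := {x | ∀ j ∈ s, bit j x ∈ t j} with hE
  have mk : ∀ b, MeasurableSet {x | bit k x = b} := fun b => measurable_bit k (MeasurableSet.of_discrete (s := {b}))
  have hadd := measure_inter_add_sdiff (μ := base) E (mk true)
  have e1 : E \ {x | bit k x = true} = E ∩ {x | bit k x = false} := by
    ext x; simp
  rw [e1, ← h] at hadd
  have hT : base (E ∩ {x | bit k x = true}) = 2⁻¹ * base E := by
    rw [← hadd, ← two_mul, ← mul_assoc, ENNReal.inv_mul_cancel (by simp) (by simp), one_mul]
  have hF := h ▸ hT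
  by_cases ht : true ∈ u <;> by_cases hf : false ∈ u
  · have hu : u = Set.univ := by ext b; cases b <;> simp [ht, hf]
    subst hu
    rw [measure_univ (μ := coin)]
    simp
  · have hu : u = {true} := by ext b; cases b <;> simp [ht, hf]
    subst hu
    rw [coin_singleton]; exact hT
  · have hu : u = {false} := by ext b; cases b <;> simp [ht, hf]
    subst hu
    rw [coin_singleton]; exact hF
  · have hu : u = ∅ := by ext b; cases b <;> simp [ht, hf]
    subst hu
    simp

/-- The law of an i.i.d. fair coin sequence. -/
noncomputable def kap : Measure (ℕ → Bool) := Measure.infinitePi (fun _ : ℕ => coin)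

instance : IsProbabilityMeasure kap := by unfold kap; infer_instance

lemma map_Bits : base.map Bits = kap := by
  refine Measure.eq_infinitePi _ ?_
  intro s t ht
  rw [Measure.map_apply measurable_Bits (MeasurableSet.pi s.countable_toSet (fun i _ => ht i))]
  have e : ∀ s : Finset ℕ, Bits ⁻¹' (Set.pi s t) = {x | ∀ j ∈ s, bit j x ∈ t j} := by
    intro s; ext x; simp [Bits, Set.mem_pi]
  rw [e]
  clear e
  induction s using Finset.induction_on with
  | empty => simp
  | insert k s hk ih =>
    rw [Finset.prod_insert hk, ← ih, ← base_split_coin s t k hk]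
    congr 1
    ext x
    simp [and_comm]

lemma coin_xor (m : Bool) (u : Set Bool) : coin {c | xor c m ∈ u} = coin u := by
  cases m
  · simp
  · simp only [Bool.xor_true]
    by_cases ht : true ∈ u <;> by_cases hf : false ∈ u
    · congr 1
      ext b; cases b <;> simp [ht, hf]
    · have hu : u = {true} := by ext b; cases b <;> simp [ht, hf]
      have hu' : {c | (!c) ∈ u} = {false} := by ext b; cases b <;> simp [ht, hf]
      rw [hu', hu, coin_singleton, coin_singleton]
    · have hu : u = {false} := by ext b; cases b <;> simp [ht, hf]
      have hu' : {c | (!c) ∈ u} = {true} := by ext b; cases b <;> simp [ht, hf]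
      rw [hu', hu, coin_singleton, coin_singleton]
    · congr 1
      ext b; cases b <;> simp [ht, hf]

/-- Masked reindexing of the bits preserves the law. -/
lemma kap_reindex (τ : ℕ → ℕ) (hτ : Function.Injective τ) (m : ℕ → Bool) :
    MeasurePreserving (fun (b : ℕ → Bool) j => xor (b (τ j)) (m j)) kap kap := by
  have hm : Measurable (fun (b : ℕ → Bool) j => xor (b (τ j)) (m j)) := by
    refine measurable_pi_lambda _ (fun j => ?_)
    exact (Measurable.of_discrete (f := fun c : Bool => xor c (m j))).comp (measurable_pi_apply (τ j))
  refine ⟨hm, ?_⟩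
  refine Measure.eq_infinitePi _ ?_
  intro s t ht
  rw [Measure.map_apply hm (MeasurableSet.pi s.countable_toSet (fun i _ => ht i))]
  classical
  have e : (fun (b : ℕ → Bool) j => xor (b (τ j)) (m j)) ⁻¹' (Set.pi s t) =
      Set.pi (s.image τ) (fun i => {c | xor c (m (Function.invFun τ i)) ∈ t (Function.invFun τ i)}) := by
    ext b
    have hl : ∀ a, Function.invFun τ (τ a) = a := Function.leftInverse_invFun hτ
    simp only [Set.mem_preimage, Set.mem_pi, Finset.mem_coe, Finset.mem_image, Set.mem_ofPred_eq,
      forall_exists_index, and_imp]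
    constructor
    · rintro h _ a ha rfl
      rw [hl]; exact h a ha
    · intro h a ha
      have := h _ a ha rfl
      rwa [hl] at this
  rw [e, kap, Measure.infinitePi_pi _ (fun i _ => MeasurableSet.of_discrete),
    Finset.prod_image (fun a _ b _ h => hτ h)]
  refine Finset.prod_congr rfl (fun i _ => ?_)
  rw [Function.leftInverse_invFun hτ i, coin_xor]

/-! ### Uniform variables as functions of the bits -/

/-- Uniform variables as functions of the bits. -/
noncomputable def UU (i : ℕ) (b : ℕ → Bool) : ℝ :=
  ∑' k : ℕ, if b (Nat.pair i k) then ((2 : ℝ)⁻¹) ^ (k + 1) else 0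

lemma unif_eq (i : ℕ) (x : ℝ) : unif i x = UU i (Bits x) := rfl

lemma summable_half : Summable (fun k : ℕ => ((2 : ℝ)⁻¹) ^ (k + 1)) := by
  have : Summable (fun k : ℕ => ((2 : ℝ)⁻¹) ^ k) :=
    summable_geometric_of_lt_one (by norm_num) (by norm_num)
  exact (summable_nat_add_iff 1).mpr this

lemma summable_UU (i : ℕ) (b : ℕ → Bool) :
    Summable (fun k : ℕ => if b (Nat.pair i k) then ((2 : ℝ)⁻¹) ^ (k + 1) else 0) := by
  refine Summable.of_nonneg_of_le (fun k => ?_) (fun k => ?_) summable_half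
  · split_ifs <;> positivity
  · split_ifs
    · exact le_rfl
    · positivity

lemma measurable_UU (i : ℕ) : Measurable (UU i) := by
  refine measurable_of_tendsto_metrizable
    (f := fun n b => ∑ k ∈ Finset.range n, if b (Nat.pair i k) then ((2 : ℝ)⁻¹) ^ (k + 1) else 0)
    (fun n => ?_) ?_
  · refine Finset.measurable_sum _ (fun k _ => ?_)
    exact (Measurable.of_discrete (f := fun c : Bool => if c then ((2 : ℝ)⁻¹) ^ (k + 1) else 0)).comp
      (measurable_pi_apply (Nat.pair i k))
  · rw [tendsto_pi_nhds]
    intro b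
    exact (summable_UU i b).hasSum.tendsto_sum_nat

lemma UU_lt_half (i : ℕ) (b : ℕ → Bool) (hb : ∃ k, b (Nat.pair i (k + 1)) = false) :
    UU i b < 1 / 2 ↔ b (Nat.pair i 0) = false := by
  have hs := summable_UU i b
  have hs' := (summable_nat_add_iff 1).mpr hs
  have e := hs.tsum_eq_zero_add
  have e2 : ∑' k : ℕ, ((2 : ℝ)⁻¹) ^ (k + 1 + 1) = 1 / 2 := by
    have h1 : ∑' k : ℕ, ((2 : ℝ)⁻¹) ^ k = 2 := by
      rw [tsum_geometric_of_lt_one (by norm_num) (by norm_num)]; norm_num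
    have : ∀ k : ℕ, ((2 : ℝ)⁻¹) ^ (k + 1 + 1) = ((2 : ℝ)⁻¹) ^ k * (1 / 4) := by
      intro k; rw [pow_succ, pow_succ]; ring
    simp_rw [this]
    rw [tsum_mul_right, h1]; norm_num
  constructor
  · intro h
    by_contra hc
    rw [Bool.not_eq_false] at hc
    unfold UU at h
    rw [e, hc] at h
    have : 0 ≤ ∑' k : ℕ, if b (Nat.pair i (k + 1)) then ((2 : ℝ)⁻¹) ^ (k + 1 + 1) else 0 :=
      tsum_nonneg (fun k => by split_ifs <;> positivity)
    norm_num at h this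
    linarith
  · intro h
    unfold UU
    rw [e, h, ← e2]
    simp only [Bool.false_eq_true, if_false, zero_add]
    obtain ⟨k, hk⟩ := hb
    refine Summable.tsum_lt_tsum (i := k) (fun j => ?_) ?_ hs' ((summable_nat_add_iff 1).mpr summable_half)
    · split_ifs
      · exact le_rfl
      · positivity
    · simp only [hk, Bool.false_eq_true, if_false]
      positivity

lemma ae_exists_false (i : ℕ) : ∀ᵐ b ∂kap, ∃ k, b (Nat.pair i (k + 1)) = false := by
  have hz : kap {b | ∀ k, b (Nat.pair i (k + 1)) = true} = 0 := by
    have hle : ∀ m : ℕ, kap {b | ∀ k, b (Nat.pair i (k + 1)) = true} ≤ (2⁻¹ : ℝ≥0∞) ^ m := by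
      intro m
      have inj : Function.Injective (fun k => Nat.pair i (k + 1)) := by
        intro a b h
        have := (Nat.pair_eq_pair.mp h).2
        omega
      calc kap {b | ∀ k, b (Nat.pair i (k + 1)) = true}
          ≤ kap (Set.pi ((Finset.range m).image (fun k => Nat.pair i (k + 1)) : Finset ℕ)
              (fun _ => {true})) := by
            refine measure_mono ?_
            intro b hb
            rw [Set.mem_ofPred_eq] at hb
            intro j hj
            simp only [Finset.coe_image, Set.mem_image] at hj
            obtain ⟨k, -, rfl⟩ := hj
            exact hb k
        _ = (2⁻¹ : ℝ≥0∞) ^ m := by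
            rw [kap, Measure.infinitePi_pi _ (fun i _ => MeasurableSet.of_discrete)]
            simp only [coin_singleton, Finset.prod_const]
            rw [Finset.card_image_of_injective _ inj, Finset.card_range]
    have ht : Filter.Tendsto (fun m : ℕ => (2⁻¹ : ℝ≥0∞) ^ m) Filter.atTop (nhds 0) :=
      ENNReal.tendsto_pow_atTop_nhds_zero_of_lt_one (by
        rw [ENNReal.inv_lt_one]; norm_num)
    exact le_antisymm (ge_of_tendsto' ht hle) bot_le
  rw [ae_iff]
  rw [← hz]
  congr 1
  ext b
  simp

/-! ### The model as a function of the bits -/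

/-- Vertex index. -/
noncomputable def vIdx (v : V) : ℕ := 2 * Encodable.encode v + 1

/-- Edge configuration as a function of the bits. -/
noncomputable def eta (p : ℝ) (b : ℕ → Bool) : EdgeCfg :=
  fun u v => boolOf (TriAdj u v) && boolOf (UU (2 * eIdx u v) b < p)

/-- Vertex coins. -/
noncomputable def vc (b : ℕ → Bool) (v : V) : Bool := !b (Nat.pair (vIdx v) 0)

/-- Colour configuration as a function of the bits. -/
noncomputable def XX (p : ℝ) (b : ℕ → Bool) : ColourCfg :=
  fun v => vc b (clusterRep (eta p b) v)

lemma edgeCfg_eq (p x : ℝ) : edgeCfg TriAdj p x = eta p (Bits x) := rfl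

lemma colour_ae (p : ℝ) : ∀ᵐ x ∂base, colourCfg TriAdj p (1 / 2) x = XX p (Bits x) := by
  have h : ∀ᵐ b ∂kap, ∀ i, ∃ k, b (Nat.pair i (k + 1)) = false := ae_all_iff.mpr ae_exists_false
  rw [← map_Bits] at h
  have h' := ae_of_ae_map measurable_Bits.aemeasurable h
  filter_upwards [h'] with x hx
  funext v
  unfold colourCfg XX vc
  rw [edgeCfg_eq, Bool.eq_iff_iff, boolOf_iff]
  unfold vtxU
  rw [unif_eq, UU_lt_half _ _ (hx _)]
  simp [vIdx]

/-! ### Measurability -/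

lemma measurable_boolOf {α : Type*} [MeasurableSpace α] {P : α → Prop} (h : MeasurableSet {a | P a}) :
    Measurable (fun a => boolOf (P a)) := by
  refine measurable_to_bool ?_
  have : (fun a => boolOf (P a)) ⁻¹' {true} = {a | P a} := by
    ext a; simp [boolOf_iff]
  rw [this]; exact h

lemma measurable_eta_apply (p : ℝ) (u v : V) : Measurable (fun b => eta p b u v) := by
  unfold eta
  have h := measurable_boolOf (P := fun b => UU (2 * eIdx u v) b < p)
    (measurableSet_lt (measurable_UU _) measurable_const)
  exact (Measurable.of_discrete (f := fun c : Bool => boolOf (TriAdj u v) && c)).comp h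

lemma measurable_eta (p : ℝ) : Measurable (eta p) :=
  measurable_pi_lambda _ (fun u => measurable_pi_lambda _ (fun v => measurable_eta_apply p u v))

/-- `n`-step connectivity. -/
def StepConn (η : EdgeCfg) (u : V) : ℕ → V → Prop
  | 0, v => u = v
  | n + 1, v => ∃ w, StepConn η u n w ∧ η w v = true

lemma conn_iff_step (η : EdgeCfg) (u v : V) : Conn η u v ↔ ∃ n, StepConn η u n v := by
  constructor
  · intro h
    induction h with
    | refl => exact ⟨0, rfl⟩
    | tail _ h ih => obtain ⟨n, hn⟩ := ih; exact ⟨n + 1, _, hn, h⟩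
  · rintro ⟨n, hn⟩
    induction n generalizing v with
    | zero => cases hn; exact Relation.ReflTransGen.refl
    | succ n ih => obtain ⟨w, h1, h2⟩ := hn; exact (ih w h1).tail h2

lemma measurableSet_step (p : ℝ) (u : V) (n : ℕ) : ∀ v, MeasurableSet {b | StepConn (eta p b) u n v} := by
  induction n with
  | zero => intro v; simp only [StepConn]; exact MeasurableSet.const _
  | succ n ih =>
    intro v
    have : {b | StepConn (eta p b) u (n + 1) v} =
        ⋃ w, ({b | StepConn (eta p b) u n w} ∩ {b | eta p b w v = true}) := by
      ext b; simp [StepConn]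
    rw [this]
    exact MeasurableSet.iUnion (fun w => (ih w).inter
      (measurable_eta_apply p w v (MeasurableSet.of_discrete (s := {true}))))

lemma measurableSet_conn (p : ℝ) (u v : V) : MeasurableSet {b | Conn (eta p b) u v} := by
  have : {b | Conn (eta p b) u v} = ⋃ n, {b | StepConn (eta p b) u n v} := by
    ext b; simp [conn_iff_step]
  rw [this]
  exact MeasurableSet.iUnion (fun n => measurableSet_step p u n v)

lemma pCluster_nonempty (η : EdgeCfg) (v : V) : (Encodable.encode '' pCluster η v).Nonempty :=
  ⟨_, v, Relation.ReflTransGen.refl, rfl⟩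

lemma clusterRep_spec (η : EdgeCfg) (v : V) :
    Conn η v (clusterRep η v) ∧
      Encodable.encode (clusterRep η v) = sInf (Encodable.encode '' pCluster η v) := by
  obtain ⟨w, hw, e⟩ := Nat.sInf_mem (pCluster_nonempty η v)
  have : clusterRep η v = w := by
    unfold clusterRep
    rw [← e, Encodable.encodek]; rfl
  rw [this]
  exact ⟨hw, e⟩

lemma clusterRep_iff (η : EdgeCfg) (v w : V) :
    clusterRep η v = w ↔
      Conn η v w ∧ ∀ z, Conn η v z → Encodable.encode w ≤ Encodable.encode z := by
  obtain ⟨h1, h2⟩ := clusterRep_spec η v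
  constructor
  · rintro rfl
    refine ⟨h1, fun z hz => ?_⟩
    rw [h2]
    exact Nat.sInf_le ⟨z, hz, rfl⟩
  · rintro ⟨hw, hm⟩
    apply Encodable.encode_injective
    refine le_antisymm ?_ (hm _ h1)
    rw [h2]
    exact Nat.sInf_le ⟨w, hw, rfl⟩

lemma measurable_clusterRep (p : ℝ) (v : V) : Measurable (fun b => clusterRep (eta p b) v) := by
  refine measurable_to_countable' (fun w => ?_)
  have : (fun b => clusterRep (eta p b) v) ⁻¹' {w} = {b | Conn (eta p b) v w} ∩
      ⋂ z, ({b | Conn (eta p b) v z}ᶜ ∪ {_b | Encodable.encode w ≤ Encodable.encode z}) := by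
    ext b
    simp only [Set.mem_preimage, Set.mem_singleton_iff, clusterRep_iff, Set.mem_inter_iff,
      Set.mem_ofPred_eq, Set.mem_iInter, Set.mem_union, Set.mem_compl_iff, imp_iff_not_or]
  rw [this]
  exact (measurableSet_conn p v w).inter (MeasurableSet.iInter (fun z =>
    (measurableSet_conn p v z).compl.union (MeasurableSet.const _)))

lemma measurable_vc (v : V) : Measurable (fun b => vc b v) :=
  (Measurable.of_discrete (f := fun c : Bool => !c)).comp (measurable_pi_apply _)

lemma measurable_vc_comp {s : (ℕ → Bool) → V} (hs : Measurable s) :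
    Measurable (fun b => vc b (s b)) := by
  refine measurable_to_countable' (fun c => ?_)
  have : (fun b => vc b (s b)) ⁻¹' {c} = ⋃ w, (s ⁻¹' {w} ∩ (fun b => vc b w) ⁻¹' {c}) := by
    ext b; simp
  rw [this]
  exact MeasurableSet.iUnion (fun w => (hs MeasurableSet.of_discrete).inter
    (measurable_vc w MeasurableSet.of_discrete))

lemma measurable_XX (p : ℝ) : Measurable (XX p) :=
  measurable_pi_lambda _ (fun v => measurable_vc_comp (measurable_clusterRep p v))

lemma rect_finite (n m : ℕ) : (Rect n m).Finite := by
  refine (Set.finite_Icc ((0, 0) : V) ((n : ℤ), (m : ℤ))).subset ?_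
  rintro ⟨a, b⟩ ⟨h1, h2, h3, h4⟩
  exact ⟨⟨h1, h3⟩, ⟨h2, h4⟩⟩

/-- Sets of colourings depending on finitely many vertices are measurable. -/
lemma measurableSet_of_finite_dep {F : Set V} (hF : F.Finite) {A : Set ColourCfg}
    (hA : ∀ ξ ξ' : ColourCfg, (∀ v ∈ F, ξ v = ξ' v) → (ξ ∈ A ↔ ξ' ∈ A)) : MeasurableSet A := by
  classical
  have := hF.to_subtype
  let r : ColourCfg → (F → Bool) := fun ξ v => ξ v
  have hr : Measurable r := measurable_pi_lambda _ (fun v => measurable_pi_apply _)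
  have : A = r ⁻¹' (r '' A) := by
    ext ξ
    constructor
    · intro h; exact ⟨ξ, h, rfl⟩
    · rintro ⟨ξ', h, e⟩
      exact (hA ξ' ξ (fun v hv => congrFun e ⟨v, hv⟩)).mp h
  rw [this]
  exact hr MeasurableSet.of_discrete

lemma daC_eq (p : ℝ) {A : Set ColourCfg} (mA : MeasurableSet A) :
    DaCMeasure TriAdj p (1 / 2) (colourEvent A) = kap {b | XX p b ∈ A} := by
  unfold DaCMeasure
  have e : (fun x => (edgeCfg TriAdj p x, colourCfg TriAdj p (1 / 2) x)) =ᵐ[base]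
      (fun b => (eta p b, XX p b)) ∘ Bits := by
    filter_upwards [colour_ae p] with x hx
    simp only [Function.comp, hx, edgeCfg_eq]
  have hm : Measurable (fun b => (eta p b, XX p b)) := (measurable_eta p).prodMk (measurable_XX p)
  rw [Measure.map_congr e, ← Measure.map_map hm measurable_Bits, map_Bits, Measure.map_apply hm]
  · rfl
  · exact measurable_snd mA

/-! ### Symmetries -/

lemma eIdx_comm (u v : V) : eIdx u v = eIdx v u := by
  unfold eIdx; exact min_comm _ _

lemma eIdx_inj {u v u' v' : V} (h : eIdx u v = eIdx u' v') : s(u, v) = s(u', v') := by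
  unfold eIdx at h
  rw [Sym2.eq_iff]
  rcases min_choice (Encodable.encode (u, v)) (Encodable.encode (v, u)) with h1 | h1 <;>
  rcases min_choice (Encodable.encode (u', v')) (Encodable.encode (v', u')) with h2 | h2 <;>
  · rw [h1, h2] at h
    have := Encodable.encode_injective h
    rw [Prod.mk.injEq] at this
    tauto

/-- Labels: vertices and unordered pairs. -/
noncomputable def lab : V ⊕ Sym2 V → ℕ
  | Sum.inl v => vIdx v
  | Sum.inr e => Sym2.lift ⟨fun u v => 2 * eIdx u v, fun u v => by simp only [eIdx_comm u v]⟩ e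

lemma lab_inr (u v : V) : lab (Sum.inr s(u, v)) = 2 * eIdx u v := rfl

lemma lab_inj : Function.Injective lab := by
  rintro (v | e) (w | f) h
  · have h : 2 * Encodable.encode v + 1 = 2 * Encodable.encode w + 1 := h
    rw [Encodable.encode_injective (show Encodable.encode v = Encodable.encode w by omega)]
  · induction f using Sym2.ind with | _ u' v' =>
    have h : 2 * Encodable.encode v + 1 = 2 * eIdx u' v' := h
    omega
  · induction e using Sym2.ind with | _ u' v' =>
    have h : 2 * eIdx u' v' = 2 * Encodable.encode w + 1 := h
    omega
  · induction e using Sym2.ind with | _ u v =>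
    induction f using Sym2.ind with | _ u' v' =>
    have h : 2 * eIdx u v = 2 * eIdx u' v' := h
    rw [eIdx_inj (show eIdx u v = eIdx u' v' by omega)]

/-- The bit action of a permutation of the labels. -/
noncomputable def act (ψ : Equiv.Perm (V ⊕ Sym2 V)) (b : ℕ → Bool) : ℕ → Bool :=
  fun j => b (Nat.pair (Equiv.Perm.viaEmbedding ψ ⟨lab, lab_inj⟩ (Nat.unpair j).1) (Nat.unpair j).2)

lemma act_pair (ψ : Equiv.Perm (V ⊕ Sym2 V)) (b : ℕ → Bool) (a : V ⊕ Sym2 V) (k : ℕ) :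
    act ψ b (Nat.pair (lab a) k) = b (Nat.pair (lab (ψ a)) k) := by
  unfold act
  rw [Nat.unpair_pair]
  have := Equiv.Perm.viaEmbedding_apply ψ ⟨lab, lab_inj⟩ a
  simp only [Function.Embedding.coeFn_mk] at this
  simp only [this]

lemma act_mp (ψ : Equiv.Perm (V ⊕ Sym2 V)) : MeasurePreserving (act ψ) kap kap := by
  have := kap_reindex (fun j => Nat.pair (Equiv.Perm.viaEmbedding ψ ⟨lab, lab_inj⟩ (Nat.unpair j).1)
    (Nat.unpair j).2) (by
      intro i j h
      have h := Nat.pair_eq_pair.mp h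
      rw [← Nat.pair_unpair i, ← Nat.pair_unpair j, (Equiv.injective _) h.1, h.2]) (fun _ => false)
  simp only [Bool.xor_false] at this
  exact this

lemma act_UU (ψ : Equiv.Perm (V ⊕ Sym2 V)) (b : ℕ → Bool) (a : V ⊕ Sym2 V) :
    UU (lab a) (act ψ b) = UU (lab (ψ a)) b := by
  unfold UU
  simp only [act_pair]

lemma act_vc (ψ : Equiv.Perm (V ⊕ Sym2 V)) (b : ℕ → Bool) (v w : V) (h : ψ (Sum.inl v) = Sum.inl w) :
    vc (act ψ b) v = vc b w := by
  have := act_pair ψ b (Sum.inl v) 0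
  rw [h] at this
  unfold vc
  exact congrArg _ this

lemma act_eta (p : ℝ) (ψ : Equiv.Perm (V ⊕ Sym2 V)) (b : ℕ → Bool) (u v u' v' : V)
    (h : ψ (Sum.inr s(u, v)) = Sum.inr s(u', v')) (ht : TriAdj u v ↔ TriAdj u' v') :
    eta p (act ψ b) u v = eta p b u' v' := by
  unfold eta
  rw [← lab_inr, act_UU, h, lab_inr, boolOf_congr ht]

/-- Permutation of the vertex labels. -/
noncomputable def actV (π : Equiv.Perm V) : (ℕ → Bool) → ℕ → Bool :=
  act (Equiv.sumCongr π (Equiv.refl _))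

lemma actV_mp (π : Equiv.Perm V) : MeasurePreserving (actV π) kap kap := act_mp _

lemma actV_vc (π : Equiv.Perm V) (b : ℕ → Bool) (v : V) : vc (actV π b) v = vc b (π v) :=
  act_vc _ _ _ _ rfl

lemma actV_eta (p : ℝ) (π : Equiv.Perm V) (b : ℕ → Bool) : eta p (actV π b) = eta p b := by
  funext u v
  exact act_eta p _ b u v u v rfl Iff.rfl

lemma sym2_swap_inv : Function.Involutive (Sym2.map (Prod.swap : V → V)) := by
  intro e
  induction e using Sym2.ind with | _ u v =>
  simp

/-- Reflection of all labels. -/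
noncomputable def actR : (ℕ → Bool) → ℕ → Bool :=
  act (Equiv.sumCongr (Equiv.prodComm ℤ ℤ) sym2_swap_inv.toPerm)

lemma tri_swap_iff (u v : V) : TriAdj u v ↔ TriAdj u.swap v.swap := by
  obtain ⟨a, b⟩ := u
  obtain ⟨c, d⟩ := v
  simp only [TriAdj, Prod.swap, Set.mem_insert_iff, Set.mem_singleton_iff, Prod.mk.injEq]
  omega

lemma actR_vc (b : ℕ → Bool) (v : V) : vc (actR b) v = vc b v.swap :=
  act_vc _ _ _ _ rfl

lemma actR_eta (p : ℝ) (b : ℕ → Bool) (u v : V) : eta p (actR b) u v = eta p b u.swap v.swap :=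
  act_eta p _ b u v _ _ rfl (tri_swap_iff u v)

/-- Flip of all the vertex coins. -/
def flipB (b : ℕ → Bool) : ℕ → Bool :=
  fun j => xor (b j) (decide ((Nat.unpair j).1 % 2 = 1))

lemma flipB_mp : MeasurePreserving flipB kap kap :=
  kap_reindex id Function.injective_id _

lemma flipB_eta (p : ℝ) (b : ℕ → Bool) : eta p (flipB b) = eta p b := by
  funext u v
  unfold eta UU flipB
  simp

lemma flipB_vc (b : ℕ → Bool) (v : V) : vc (flipB b) v = !vc b v := by
  unfold vc flipB vIdx
  simp [Nat.add_mod]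

lemma flipB_XX (p : ℝ) (b : ℕ → Bool) (v : V) : XX p (flipB b) v = !XX p b v := by
  unfold XX
  rw [flipB_eta, flipB_vc]

lemma exists_perm_of_ker {F : Type*} [Finite F] (f g : F → V) (h : ∀ v w, f v = f w ↔ g v = g w) :
    ∃ π : Equiv.Perm V, ∀ v, π (f v) = g v := by
  have hfin : Finite (Set.range f) := Set.finite_range f |>.to_subtype
  let g' : Set.range f → V := fun y => g y.2.choose
  have hg' : ∀ v, g' ⟨f v, v, rfl⟩ = g v := by
    intro v
    have hh : ∃ w, f w = f v := ⟨v, rfl⟩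
    exact (h _ _).mp hh.choose_spec
  obtain ⟨σ, hσ⟩ := Equiv.Perm.exists_extending_pair (fun y : Set.range f => (y : V)) g'
    Subtype.val_injective (by
      rintro ⟨_, v, rfl⟩ ⟨_, w, rfl⟩ e
      rw [hg', hg'] at e
      exact Subtype.ext ((h _ _).mpr e))
  exact ⟨σ, fun v => by rw [← hg', ← hσ]⟩

/-- Exchanging the representatives of the clusters does not change the law of the colouring. -/
lemma swap_reps {F : Set V} (hF : F.Finite) {A : Set ColourCfg}
    (hA : ∀ ξ ξ' : ColourCfg, (∀ v ∈ F, ξ v = ξ' v) → (ξ ∈ A ↔ ξ' ∈ A))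
    (s1 s2 : (ℕ → Bool) → V → V) (m1 : ∀ v, Measurable (fun b => s1 b v))
    (m2 : ∀ v, Measurable (fun b => s2 b v))
    (i1 : ∀ π b, s1 (actV π b) = s1 b) (i2 : ∀ π b, s2 (actV π b) = s2 b)
    (ker : ∀ b v w, s1 b v = s1 b w ↔ s2 b v = s2 b w) :
    kap {b | (fun v => vc b (s1 b v)) ∈ A} = kap {b | (fun v => vc b (s2 b v)) ∈ A} := by
  have hfin : Finite F := hF.to_subtype
  have mA := measurableSet_of_finite_dep hF hA
  have mE : ∀ s : (ℕ → Bool) → V → V, (∀ v, Measurable (fun b => s b v)) →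
      MeasurableSet {b | (fun v => vc b (s b v)) ∈ A} := fun s hs =>
    (measurable_pi_lambda (fun b v => vc b (s b v)) (fun v => measurable_vc_comp (hs v))) mA
  let D : (F → V) × (F → V) → Set (ℕ → Bool) := fun t =>
    {b | ∀ v : F, s1 b v = t.1 v ∧ s2 b v = t.2 v}
  have mD : ∀ t, MeasurableSet (D t) := by
    intro t
    have : D t = ⋂ v : F, ((fun b => s1 b v) ⁻¹' {t.1 v} ∩ (fun b => s2 b v) ⁻¹' {t.2 v}) := by
      ext b; simp [D]
    rw [this]
    exact MeasurableSet.iInter (fun v => (m1 v MeasurableSet.of_discrete).inter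
      (m2 v MeasurableSet.of_discrete))
  have dD : Pairwise (Function.onFun Disjoint D) := by
    intro t t' htt
    refine Set.disjoint_left.mpr (fun b hb hb' => htt ?_)
    refine Prod.ext (funext fun v => ?_) (funext fun v => ?_)
    · exact (hb v).1.symm.trans (hb' v).1
    · exact (hb v).2.symm.trans (hb' v).2
  have uD : ⋃ t, D t = Set.univ := by
    ext b
    simp only [Set.mem_iUnion, Set.mem_univ, iff_true]
    exact ⟨(fun v => s1 b v, fun v => s2 b v), fun v => ⟨rfl, rfl⟩⟩
  have dec : ∀ E : Set (ℕ → Bool), MeasurableSet E → kap E = ∑' t, kap (E ∩ D t) := by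
    intro E hE
    rw [← measure_iUnion (fun t t' h => (dD h).mono Set.inter_subset_right Set.inter_subset_right)
      (fun t => hE.inter (mD t)), ← Set.inter_iUnion, uD, Set.inter_univ]
  rw [dec _ (mE s1 m1), dec _ (mE s2 m2)]
  refine tsum_congr (fun t => ?_)
  by_cases hne : (D t).Nonempty
  · obtain ⟨b0, hb0⟩ := hne
    obtain ⟨π, hπ⟩ := exists_perm_of_ker t.1 t.2 (fun v w => by
      rw [← (hb0 v).1, ← (hb0 w).1, ← (hb0 v).2, ← (hb0 w).2]
      exact ker b0 v w)
    rw [← (actV_mp π).measure_preimage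
      ((mE s1 m1).inter (mD t)).nullMeasurableSet]
    congr 1
    ext b
    have h1 : actV π b ∈ D t ↔ b ∈ D t := by
      show (∀ v : F, _) ↔ (∀ v : F, _)
      rw [i1, i2]
    rw [Set.mem_preimage, Set.mem_inter_iff, Set.mem_inter_iff, h1]
    refine and_congr_left (fun hb => ?_)
    show (fun v => vc (actV π b) (s1 (actV π b) v)) ∈ A ↔ (fun v => vc b (s2 b v)) ∈ A
    refine hA _ _ (fun v hv => ?_)
    rw [i1, actV_vc, (hb ⟨v, hv⟩).1, hπ, (hb ⟨v, hv⟩).2]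
  · rw [Set.not_nonempty_iff_eq_empty.mp hne]
    simp

/-! ### Reflection invariance of the colouring law -/

lemma eta_symm (p : ℝ) (b : ℕ → Bool) (u v : V) : eta p b u v = eta p b v u := by
  unfold eta
  rw [eIdx_comm]
  congr 1
  apply boolOf_congr
  obtain ⟨a, b⟩ := u
  obtain ⟨c, d⟩ := v
  simp only [TriAdj, Set.mem_insert_iff, Set.mem_singleton_iff, Prod.mk.injEq]
  omega

lemma conn_symm (p : ℝ) (b : ℕ → Bool) {u v : V} (h : Conn (eta p b) u v) : Conn (eta p b) v u := by
  induction h with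
  | refl => exact Relation.ReflTransGen.refl
  | tail _ h ih => exact Relation.ReflTransGen.head ((eta_symm p b _ _).trans h) ih

lemma rep_eq_iff (p : ℝ) (b : ℕ → Bool) (u v : V) :
    clusterRep (eta p b) u = clusterRep (eta p b) v ↔ Conn (eta p b) u v := by
  constructor
  · intro h
    have h1 := (clusterRep_spec (eta p b) u).1
    rw [h] at h1
    exact h1.trans (conn_symm p b (clusterRep_spec (eta p b) v).1)
  · intro h
    rw [clusterRep_iff]
    obtain ⟨h1, h2⟩ := (clusterRep_iff (eta p b) v _).mp rfl
    exact ⟨h.trans h1, fun z hz => h2 z ((conn_symm p b h).trans hz)⟩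

lemma conn_actR (p : ℝ) (b : ℕ → Bool) (u v : V) :
    Conn (eta p (actR b)) u v ↔ Conn (eta p b) u.swap v.swap := by
  constructor
  · intro h
    induction h with
    | refl => exact Relation.ReflTransGen.refl
    | tail _ h ih =>
      rw [actR_eta] at h
      exact ih.tail h
  · intro h
    have key : ∀ x y, Conn (eta p b) x y → Conn (eta p (actR b)) x.swap y.swap := by
      intro x y h
      induction h with
      | refl => exact Relation.ReflTransGen.refl
      | tail _ h ih =>
        refine ih.tail ?_
        rw [actR_eta, Prod.swap_swap, Prod.swap_swap]
        exact h
    simpa using key _ _ h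

lemma actR_mp : MeasurePreserving actR kap kap := act_mp _

lemma reflect_law (p : ℝ) {F : Set V} (hF : F.Finite) {A : Set ColourCfg}
    (hA : ∀ ξ ξ' : ColourCfg, (∀ v ∈ F, ξ v = ξ' v) → (ξ ∈ A ↔ ξ' ∈ A)) :
    kap {b | XX p b ∈ A} = kap {b | (fun v : V => XX p b v.swap) ∈ A} := by
  have mA := measurableSet_of_finite_dep hF hA
  rw [← actR_mp.measure_preimage (s := {b | XX p b ∈ A}) (measurable_XX p mA).nullMeasurableSet]
  have e1 : actR ⁻¹' {b | XX p b ∈ A} =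
      {b | (fun v => vc b (Prod.swap (clusterRep (eta p (actR b)) v))) ∈ A} := by
    ext b
    show (fun v => vc (actR b) _) ∈ A ↔ (fun v => _) ∈ A
    simp only [actR_vc]
  rw [e1]
  refine swap_reps hF hA (fun b v => Prod.swap (clusterRep (eta p (actR b)) v))
    (fun b v => clusterRep (eta p b) v.swap) (fun v => ?_) (fun v => measurable_clusterRep p _) ?_ ?_ ?_
  · exact (Measurable.of_discrete (f := (Prod.swap : V → V))).comp
      ((measurable_clusterRep p v).comp actR_mp.measurable)
  · intro π b
    have : eta p (actR (actV π b)) = eta p (actR b) := by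
      funext u v
      rw [actR_eta, actR_eta, actV_eta]
    simp only [this]
  · intro π b
    simp only [actV_eta]
  · intro b v w
    simp only [Prod.swap_injective.eq_iff]
    rw [rep_eq_iff, rep_eq_iff, conn_actR]

lemma vertBC_dep (n : ℕ) (ξ ξ' : ColourCfg) (h : ∀ v ∈ Rect n n, ξ v = ξ' v) :
    ξ ∈ VertBC TriAdj n n ↔ ξ' ∈ VertBC TriAdj n n := by
  rw [mem_vert, mem_vert]
  exact crossing_mono_iff (fun v hv => by rw [h v hv])

/-- **Rhombus crossings at `r = 1/2` on the triangular lattice (Lemma 5.1).**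
For any `p ∈ [0,1]` and `n ∈ ℕ`, the probability of a black vertical crossing
of the rhombus `S_{n,n}` is exactly `1/2`. -/
theorem tri_rhombus_crossing (p : ℝ) (hp0 : 0 ≤ p) (hp1 : p ≤ 1) (n : ℕ) :
    DaCMeasure TriAdj p (1 / 2) (colourEvent (VertBC TriAdj n n)) = 1 / 2 := by
  have mA : MeasurableSet (VertBC TriAdj n n) :=
    measurableSet_of_finite_dep (rect_finite n n) (vertBC_dep n)
  rw [daC_eq p mA]
  have mE : MeasurableSet {b | XX p b ∈ VertBC TriAdj n n} := measurable_XX p mA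
  have h1 := reflect_law p (rect_finite n n) (vertBC_dep n)
  have h2 : kap {b | (fun v : V => XX p b v.swap) ∈ VertBC TriAdj n n} =
      kap {b | XX p b ∈ VertBC TriAdj n n}ᶜ := by
    have mS : MeasurableSet {b | (fun v : V => XX p b v.swap) ∈ VertBC TriAdj n n} :=
      (measurable_pi_lambda (fun b (v : V) => XX p b v.swap)
        (fun v => (measurable_pi_apply v.swap).comp (measurable_XX p))) mA
    rw [← flipB_mp.measure_preimage mS.nullMeasurableSet]
    congr 1
    ext b
    show (fun v : V => XX p (flipB b) v.swap) ∈ VertBC TriAdj n n ↔ XX p b ∉ VertBC TriAdj n n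
    simp only [flipB_XX]
    exact flip_swap_mem n (XX p b)
  have h3 := measure_add_measure_compl (μ := kap) mE
  rw [← h2, ← h1, measure_univ, ← two_mul] at h3
  rw [ENNReal.eq_div_iff (by simp) (by simp)]
  exact h3

end DaC
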